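/- A discrete group G is C*-simple if and only if G has Powers' averaging property. -/

import Mathlib

noncomputable section
open scoped ENNReal ComplexOrder lp
open MeasureTheory
set_option maxHeartbeats 1000000
set_option synthInstance.maxHeartbeats 1000000

universe u

variable {G : Type u} [Group G]

theorem translat_mem (g : G) (f : ℓ²(G, ℂ)) : Memℓp (fun h => f (g⁻¹ * h)) 2 := by
  have hf : Summable fun i : G => ‖f i‖ ^ (2 : ℝ≥0∞).toReal :=
    (memℓp_gen_iff (by norm_num)).1 (lp.memℓp f)
  exact memℓp_gen ((Equiv.mulLeft g⁻¹).summable_iff.2 hf)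

/-- The left regular representation of `g ∈ G` as a linear isometric bijection of `ℓ²(G)`,
given by `(λ_g ξ)(h) = ξ(g⁻¹ h)`. -/
def lregE (g : G) : ℓ²(G, ℂ) ≃ₗᵢ[ℂ] ℓ²(G, ℂ) :=
{ toFun := fun f => ⟨fun h => f (g⁻¹ * h), translat_mem g f⟩
  invFun := fun f => ⟨fun h => f (g * h), by
    have := translat_mem g⁻¹ f; simp only [inv_inv] at this; exact this⟩
  map_add' := by intro f₁ f₂; ext h; simp [lp.coeFn_add]; rfl
  map_smul' := by intro c f; ext h; simp [lp.coeFn_smul]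
  left_inv := by intro f; ext h; simp
  right_inv := by intro f; ext h; simp
  norm_map' := by
    intro f
    rw [lp.norm_eq_tsum_rpow (by norm_num) f, lp.norm_eq_tsum_rpow (by norm_num)]
    congr 1
    exact (Equiv.mulLeft g⁻¹).tsum_eq (fun h => ‖f h‖ ^ (2 : ℝ≥0∞).toReal) }

/-- The left regular representation `λ` as bounded operators on `ℓ²(G)`. -/
def lreg (g : G) : ℓ²(G, ℂ) →L[ℂ] ℓ²(G, ℂ) :=
  (lregE g).toContinuousLinearEquiv.toContinuousLinearMap

variable (G) in
/-- The reduced group C*-algebra `C*_λ(G)`: the norm-closed star subalgebra of the algebra of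
bounded operators on `ℓ²(G)` generated by the image of the left regular representation. -/
def redCstar : StarSubalgebra ℂ (ℓ²(G, ℂ) →L[ℂ] ℓ²(G, ℂ)) :=
  (StarAlgebra.adjoin ℂ (Set.range (lreg (G := G)))).topologicalClosure

/-- `λ_g` as an element of the reduced group C*-algebra. -/
def uu (g : G) : redCstar G :=
  ⟨lreg g, StarSubalgebra.le_topologicalClosure _ (StarAlgebra.subset_adjoin ℂ _ ⟨g, rfl⟩)⟩

variable (G) in
/-- `G` is C*-simple: `C*_λ(G)` has no closed two-sided ideals other than `{0}` and the
whole algebra. -/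
def IsCstarSimple : Prop :=
  ∀ I : TwoSidedIdeal (redCstar G), IsClosed (I : Set (redCstar G)) → I = ⊥ ∨ I = ⊤

/-- The vector `δ_e ∈ ℓ²(G)`. -/
def deltaOne : ℓ²(G, ℂ) := letI := Classical.decEq G; lp.single 2 (1 : G) 1

variable (G) in
/-- The canonical tracial state `τ_λ(a) = ⟨a δ_e, δ_e⟩` on the reduced C*-algebra
(as a scalar-valued function). -/
def tauF (a : redCstar G) : ℂ :=
  inner (𝕜 := ℂ) (deltaOne (G := G)) ((a : ℓ²(G, ℂ) →L[ℂ] ℓ²(G, ℂ)) (deltaOne (G := G)))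

attribute [irreducible] redCstar lreg lregE deltaOne uu tauF

instance : NormedRing (redCstar G) := inferInstance
instance : NormedSpace ℂ (redCstar G) := inferInstance

variable (G) in
/-- `G` has Powers' averaging property: conjugate averages of any element of `C*_λ(G)` come
arbitrarily close (in norm) to the corresponding multiple of the identity given by the
canonical trace. -/
def HasPowersAveraging : Prop :=
  ∀ (a : redCstar G) (ε : ℝ), 0 < ε → ∃ (n : ℕ) (_ : 0 < n) (g : Fin n → G),
    ‖(n : ℂ)⁻¹ • (∑ i : Fin n, uu (g i) * a * uu (g i)⁻¹) - tauF G a • (1 : redCstar G)‖ < ε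

/-!
Means on `G` form a compact right topological semigroup under convolution. An extreme point `μ` of
a minimal closed convex left ideal plays the part of a point of the Furstenberg boundary: `μ` is
multiplicative on its Poisson transforms `P_μ f : g ↦ μ (f (g * ·))`, and absorbs every mean which
absorbs it.

Let `φ` be a state on `B(ℓ²(G))` and let `ψ` be the average of its conjugates against `μ`. The
functions `P_μ f`, as multiplication operators, lie in the multiplicative domain of `ψ`, and
`ψ(P_μ f) = μ(f)`; hence `ψ(λ_t) ≠ 0` forces `t` to fix `μ`. The stabilizer `H` of `μ` is amenable,
having `μ` as an invariant mean, so the quasi-regular representation on `ℓ²(G/H)` is weakly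
contained in `λ`. If `G` is C*-simple, then `C*_λ(G)` acts isometrically on `ℓ²(G/H)`, and the
trace extends to a state `θ` on `B(ℓ²(G/H))`. The average of `θ` vanishes at `t ≠ 1`, yet it is
multiplicative against the function `gH ↦ ψ(λ_{g⁻¹tg})`, which is supported on the fixed points
of `t`; hence `ψ(λ_t) = 0`. Thus every averaged state restricts to the trace, and Hahn-Banach
separation turns this into norm convergence of averages of conjugates.

Conversely, averaging the conjugates of `a* a` for some `a ≠ 0` in a closed ideal shows that the
nonzero scalar `τ(a* a)` lies in the ideal.
-/

open Set Filter Topology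

/-! ### Means and convolution -/

section Means

/-- The Banach algebra of bounded real-valued functions on `Y`. -/
abbrev LInf (Y : Type*) := ℓ^∞(Y, ℝ)

variable {Y Z : Type*} {M : Type*} [Monoid M]

namespace LInf

theorem ext {f g : LInf Y} (h : ∀ y, f y = g y) : f = g := lp.ext (funext h)

@[simp] theorem add_apply (f g : LInf Y) (y : Y) : (f + g) y = f y + g y := rfl
@[simp] theorem sub_apply (f g : LInf Y) (y : Y) : (f - g) y = f y - g y := rfl
@[simp] theorem smul_apply (c : ℝ) (f : LInf Y) (y : Y) : (c • f) y = c * f y := rfl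
@[simp] theorem one_apply (y : Y) : (1 : LInf Y) y = 1 := rfl

theorem abs_apply_le (f : LInf Y) (y : Y) : |f y| ≤ ‖f‖ :=
  lp.norm_apply_le_norm (by simp) f y

/-- The bounded function `f` as an element of `ℓ^∞`. -/
def ofBound (f : Y → ℝ) (C : ℝ) (h : ∀ y, |f y| ≤ C) : LInf Y :=
  ⟨f, memℓp_infty ⟨C, forall_mem_range.2 h⟩⟩

@[simp] theorem ofBound_apply (f : Y → ℝ) (C : ℝ) (h : ∀ y, |f y| ≤ C) (y : Y) :
    ofBound f C h y = f y := rfl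

theorem norm_le {f : LInf Y} {C : ℝ} (hC : 0 ≤ C) (h : ∀ y, |f y| ≤ C) : ‖f‖ ≤ C :=
  lp.norm_le_of_forall_le hC h

/-- Composition with a map `q : Y → Z`. -/
def comp (q : Y → Z) : LInf Z →L[ℝ] LInf Y :=
  LinearMap.mkContinuous
    { toFun := fun f => ofBound (fun y => f (q y)) ‖f‖ fun y => LInf.abs_apply_le f (q y)
      map_add' := fun _ _ => rfl
      map_smul' := fun _ _ => rfl } 1
    fun f => by
      rw [one_mul]
      exact norm_le (norm_nonneg f) fun y => abs_apply_le f (q y)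

end LInf

/-- The left translate `h ↦ f (g * h)` of `f`. -/
def leftTranslate (g : M) : LInf M →L[ℝ] LInf M := LInf.comp (g * ·)

@[simp] theorem leftTranslate_apply (g : M) (f : LInf M) (h : M) :
    leftTranslate g f h = f (g * h) := rfl

theorem leftTranslate_leftTranslate (g k : M) (f : LInf M) :
    leftTranslate g (leftTranslate k f) = leftTranslate (k * g) f :=
  LInf.ext fun h => by simp [mul_assoc]

theorem norm_leftTranslate_le (g : M) (f : LInf M) : ‖leftTranslate g f‖ ≤ ‖f‖ :=
  LInf.norm_le (norm_nonneg f) fun h => LInf.abs_apply_le f (g * h)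

/-- The Poisson transform `P_μ f`, whose value at `g` is the integral of `h ↦ f (g * h)`
against `μ`. -/
def poisson (μ : WeakDual ℝ (LInf M)) : LInf M →L[ℝ] LInf M :=
  have bound (f : LInf M) (g : M) :
      |μ (leftTranslate g f)| ≤ ‖WeakDual.toStrongDual μ‖ * ‖f‖ :=
    ((WeakDual.toStrongDual μ).le_opNorm _).trans <|
      mul_le_mul_of_nonneg_left (norm_leftTranslate_le g f) (norm_nonneg _)
  LinearMap.mkContinuous
    { toFun := fun f => LInf.ofBound (fun g => μ (leftTranslate g f)) _ (bound f)
      map_add' := fun f f' => LInf.ext fun h => by simp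
      map_smul' := fun c f => LInf.ext fun h => by simp } _
    fun f => LInf.norm_le (by positivity) (bound f)

@[simp] theorem poisson_apply (μ : WeakDual ℝ (LInf M)) (f : LInf M) (g : M) :
    poisson μ f g = μ (leftTranslate g f) := rfl

theorem poisson_leftTranslate (μ : WeakDual ℝ (LInf M)) (g : M) (f : LInf M) :
    poisson μ (leftTranslate g f) = leftTranslate g (poisson μ f) :=
  LInf.ext fun h => by simp [leftTranslate_leftTranslate]

/-- The Arens product `ν * μ` as a function of `ν`: the functional `f ↦ ν (P_μ f)`. -/
def convRight (μ : WeakDual ℝ (LInf M)) : WeakDual ℝ (LInf M) →L[ℝ] WeakDual ℝ (LInf M) where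
  toFun ν := (WeakDual.toStrongDual ν).comp (poisson μ)
  map_add' _ _ := rfl
  map_smul' _ _ := rfl
  cont := WeakDual.continuous_of_continuous_eval fun f => WeakDual.eval_continuous (poisson μ f)

@[simp] theorem convRight_apply (μ ν : WeakDual ℝ (LInf M)) (f : LInf M) :
    convRight μ ν f = ν (poisson μ f) := rfl

theorem poisson_convRight (μ ν : WeakDual ℝ (LInf M)) (f : LInf M) :
    poisson (convRight μ ν) f = poisson ν (poisson μ f) :=
  LInf.ext fun g => by simp [poisson_leftTranslate]

theorem convRight_convRight (μ ν κ : WeakDual ℝ (LInf M)) :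
    convRight μ (convRight ν κ) = convRight (convRight μ ν) κ :=
  DFunLike.ext _ _ fun f => by simp only [convRight_apply, poisson_convRight]

/-- A mean on `Y`: a positive unital functional on the bounded functions. -/
structure IsMean (μ : WeakDual ℝ (LInf Y)) : Prop where
  map_one : μ 1 = 1
  nonneg : ∀ f : LInf Y, (∀ y, 0 ≤ f y) → 0 ≤ μ f

namespace IsMean

theorem abs_le_of_linearMap {φ : LInf Y →ₗ[ℝ] ℝ} (h_one : φ 1 = 1)
    (h_nonneg : ∀ f : LInf Y, (∀ y, 0 ≤ f y) → 0 ≤ φ f) (f : LInf Y) : |φ f| ≤ ‖f‖ := by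
  have upper := h_nonneg (‖f‖ • 1 - f) fun y => by
    simpa using (abs_le.1 (LInf.abs_apply_le f y)).2
  have lower := h_nonneg (‖f‖ • 1 + f) fun y => by
    simpa [neg_le_iff_add_nonneg'] using (abs_le.1 (LInf.abs_apply_le f y)).1
  simp only [map_sub, map_add, map_smul, h_one, smul_eq_mul, mul_one] at upper lower
  exact abs_le.2 ⟨by linarith, by linarith⟩

theorem abs_le {μ : WeakDual ℝ (LInf Y)} (hμ : IsMean μ) (f : LInf Y) : |μ f| ≤ ‖f‖ :=
  abs_le_of_linearMap (φ := (WeakDual.toStrongDual μ).toLinearMap) hμ.map_one hμ.nonneg f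

theorem mono {μ : WeakDual ℝ (LInf Y)} (hμ : IsMean μ) {f g : LInf Y} (h : ∀ y, f y ≤ g y) :
    μ f ≤ μ g := by
  simpa using hμ.nonneg (g - f) fun y => by simpa using h y

/-- A positive unital linear functional on bounded functions, as an element of the dual. -/
def ofLinearMap (φ : LInf Y →ₗ[ℝ] ℝ) (h_one : φ 1 = 1)
    (h_nonneg : ∀ f : LInf Y, (∀ y, 0 ≤ f y) → 0 ≤ φ f) : WeakDual ℝ (LInf Y) :=
  StrongDual.toWeakDual <| φ.mkContinuous 1 fun f => by
    simpa using abs_le_of_linearMap h_one h_nonneg f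

@[simp] theorem ofLinearMap_apply (φ : LInf Y →ₗ[ℝ] ℝ) (h_one : φ 1 = 1)
    (h_nonneg : ∀ f : LInf Y, (∀ y, 0 ≤ f y) → 0 ≤ φ f) (f : LInf Y) :
    ofLinearMap φ h_one h_nonneg f = φ f := rfl

theorem isMean_ofLinearMap (φ : LInf Y →ₗ[ℝ] ℝ) (h_one : φ 1 = 1)
    (h_nonneg : ∀ f : LInf Y, (∀ y, 0 ≤ f y) → 0 ≤ φ f) :
    IsMean (ofLinearMap φ h_one h_nonneg) := ⟨h_one, h_nonneg⟩

theorem convRight {μ ν : WeakDual ℝ (LInf M)} (hμ : IsMean μ) (hν : IsMean ν) :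
    IsMean (convRight μ ν) where
  map_one := by
    have : poisson μ 1 = 1 := LInf.ext fun _ => hμ.map_one
    rw [convRight_apply, this, hν.map_one]
  nonneg _ hf := hν.nonneg _ fun _ => hμ.nonneg _ fun _ => hf _

theorem exists_weighted {μ : WeakDual ℝ (LInf Y)} (hμ : IsMean μ) {q : LInf Y}
    (hq : ∀ y, 0 ≤ q y) (hpos : 0 < μ q) : ∃ ν, IsMean ν ∧ ∀ f, μ q * ν f = μ (q * f) := by
  let φ : LInf Y →ₗ[ℝ] ℝ :=
    (μ q)⁻¹ • (WeakDual.toStrongDual μ).toLinearMap ∘ₗ LinearMap.mulLeft ℝ q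
  have φ_apply (f : LInf Y) : φ f = (μ q)⁻¹ * μ (q * f) := rfl
  refine ⟨_, isMean_ofLinearMap φ ?_ fun f hf => ?_, fun f => ?_⟩
  · rw [φ_apply, mul_one, inv_mul_cancel₀ hpos.ne']
  · exact mul_nonneg (inv_nonneg.2 hpos.le) (hμ.nonneg _ fun y => mul_nonneg (hq y) (hf y))
  · rw [ofLinearMap_apply, φ_apply, mul_inv_cancel_left₀ hpos.ne']

end IsMean

/-- The point mass at `y`. -/
def pointMass (y : Y) : WeakDual ℝ (LInf Y) :=
  IsMean.ofLinearMap
    { toFun := fun f => f y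
      map_add' := fun _ _ => rfl
      map_smul' := fun _ _ => rfl } rfl fun _ hf => hf y

theorem isMean_pointMass (y : Y) : IsMean (pointMass y) := IsMean.isMean_ofLinearMap _ _ _

variable (Y) in
theorem convex_setOf_isMean : Convex ℝ {μ : WeakDual ℝ (LInf Y) | IsMean μ} := by
  intro μ hμ ν hν a b ha hb hab
  refine ⟨?_, fun f hf => ?_⟩
  · change a * μ 1 + b * ν 1 = 1
    rw [hμ.map_one, hν.map_one, mul_one, mul_one, hab]
  · exact add_nonneg (mul_nonneg ha (hμ.nonneg f hf)) (mul_nonneg hb (hν.nonneg f hf))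

variable (Y) in
theorem isCompact_setOf_isMean : IsCompact {μ : WeakDual ℝ (LInf Y) | IsMean μ} := by
  refine (WeakDual.isCompact_closedBall (0 : StrongDual ℝ (LInf Y)) 1).of_isClosed_subset ?_ ?_
  · have : {μ : WeakDual ℝ (LInf Y) | IsMean μ} = {μ | μ 1 = 1} ∩
        ⋂ f : LInf Y, ⋂ _ : ∀ y, 0 ≤ f y, {μ | 0 ≤ μ f} := by
      ext μ
      simp only [mem_inter_iff, mem_iInter]
      exact ⟨fun h => ⟨h.1, h.2⟩, fun h => ⟨h.1, h.2⟩⟩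
    rw [this]
    exact (isClosed_eq (WeakDual.eval_continuous _) continuous_const).inter <|
      isClosed_iInter fun f => isClosed_iInter fun _ =>
        isClosed_le continuous_const (WeakDual.eval_continuous f)
  · intro μ hμ
    simp only [mem_preimage, Metric.mem_closedBall, dist_zero_right]
    exact ContinuousLinearMap.opNorm_le_bound _ zero_le_one fun f => by
      simpa using IsMean.abs_le hμ f

end Means

/-! ### Boundary means -/

section BoundaryMeans

theorem exists_mem_map_eq_self_of_isCompact_convex {E : Type*} [AddCommGroup E] [Module ℝ E]
    [TopologicalSpace E] [IsTopologicalAddGroup E] [ContinuousSMul ℝ E] [T2Space E] {K : Set E}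
    (hK : IsCompact K) (hconv : Convex ℝ K) (hne : K.Nonempty) (T : E →L[ℝ] E)
    (hT : MapsTo T K K) : ∃ x ∈ K, T x = x := by
  obtain ⟨x₀, hx₀⟩ := hne
  let c : ℕ → E := fun n => birkhoffAverage ℝ T id (n + 1) x₀
  have orbit_mem (n : ℕ) : T^[n] x₀ ∈ K := hT.iterate n hx₀
  have c_mem (n : ℕ) : c n ∈ K := by
    simp only [c, birkhoffAverage, birkhoffSum, Finset.smul_sum]
    refine hconv.sum_mem (fun _ _ => by positivity) ?_ fun k _ => orbit_mem k
    rw [Finset.sum_const, Finset.card_range, nsmul_eq_mul, mul_inv_cancel₀ (by positivity)]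
  have T_c (n : ℕ) : T (c n) - c n = ((n + 1 : ℕ) : ℝ)⁻¹ • (T^[n + 1] x₀ - x₀) := by
    have : T (c n) = birkhoffAverage ℝ T id (n + 1) (T x₀) := by
      simp only [c, birkhoffAverage, birkhoffSum, map_smul, map_sum, id_eq,
        ← Function.iterate_succ_apply', Function.iterate_succ_apply]
    rw [this]
    exact birkhoffAverage_apply_sub_birkhoffAverage (R := ℝ) T id (n + 1) x₀
  have tendsto_zero : Tendsto (fun n => T (c n) - c n) atTop (𝓝 0) := by
    simp only [T_c, smul_sub]
    have hε : Tendsto (fun n : ℕ => ((n + 1 : ℕ) : ℝ)⁻¹) atTop (𝓝 0) :=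
      (tendsto_add_atTop_iff_nat 1).2 tendsto_inv_atTop_nhds_zero_nat
    have hbdd := hK.isVonNBounded ℝ
    simpa using (hbdd.smul_tendsto_zero (.of_forall fun n => orbit_mem (n + 1)) hε).sub
      (hbdd.smul_tendsto_zero (.of_forall fun _ => hx₀) hε)
  obtain ⟨x, hx, hlim⟩ := hK.ultrafilter_le_nhds ((hyperfilter ℕ).map c)
    (le_principal_iff.2 (mem_map.2 (univ_mem' c_mem)))
  have hc : Tendsto c (hyperfilter ℕ) (𝓝 x) := hlim
  have hTc := ((T.continuous.tendsto x).comp hc).sub hc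
  exact ⟨x, hx, sub_eq_zero.1
    (tendsto_nhds_unique hTc (tendsto_zero.mono_left Nat.hyperfilter_le_atTop))⟩

variable {M : Type*} [Monoid M]

/-- A nonempty weak-* closed convex left ideal of the semigroup of means on `M`. -/
structure IsMeanIdeal (K : Set (WeakDual ℝ (LInf M))) : Prop where
  nonempty : K.Nonempty
  isClosed : IsClosed K
  convex : Convex ℝ K
  isMean : ∀ μ ∈ K, IsMean μ
  convRight_mem : ∀ μ ∈ K, ∀ ν, IsMean ν → convRight μ ν ∈ K

namespace IsMeanIdeal

variable {K : Set (WeakDual ℝ (LInf M))}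

theorem isCompact (hK : IsMeanIdeal K) : IsCompact K :=
  (isCompact_setOf_isMean M).of_isClosed_subset hK.isClosed hK.isMean

variable (M) in
theorem setOf_isMean : IsMeanIdeal {μ : WeakDual ℝ (LInf M) | IsMean μ} where
  nonempty := ⟨_, isMean_pointMass 1⟩
  isClosed := (isCompact_setOf_isMean M).isClosed
  convex := convex_setOf_isMean M
  isMean _ h := h
  convRight_mem _ hμ _ hν := IsMean.convRight hμ hν

theorem sInter {c : Set (Set (WeakDual ℝ (LInf M)))} (hc : ∀ K ∈ c, IsMeanIdeal K)
    (hchain : IsChain (· ⊆ ·) c) (hne : c.Nonempty) : IsMeanIdeal (⋂₀ c) where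
  nonempty := by
    have := hne.to_subtype
    have hdir : DirectedOn (· ⊇ ·) c := fun s hs t ht =>
      (hchain.total hs ht).elim (fun h => ⟨s, hs, subset_rfl, h⟩) fun h => ⟨t, ht, h, subset_rfl⟩
    exact IsCompact.nonempty_sInter_of_directed_nonempty_isCompact_isClosed
      hdir (fun K hK => (hc K hK).nonempty)
      (fun K hK => (hc K hK).isCompact) fun K hK => (hc K hK).isClosed
  isClosed := isClosed_sInter fun K hK => (hc K hK).isClosed
  convex := convex_sInter fun K hK => (hc K hK).convex
  isMean μ hμ := hne.elim fun K hK => (hc K hK).isMean μ (hμ K hK)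
  convRight_mem μ hμ ν hν K hK := (hc K hK).convRight_mem μ (hμ K hK) ν hν

variable (M) in
theorem exists_minimal : ∃ K : Set (WeakDual ℝ (LInf M)), Minimal IsMeanIdeal K := by
  refine zorn_superset {K | IsMeanIdeal K} fun c hc hchain => ?_
  rcases c.eq_empty_or_nonempty with rfl | hne
  · exact ⟨_, setOf_isMean M, by simp⟩
  · exact ⟨_, sInter hc hchain hne, fun _ => sInter_subset_of_mem⟩

theorem setOf_convRight_eq_self (hK : IsMeanIdeal K) {η : WeakDual ℝ (LInf M)} (hη : η ∈ K) :
    IsMeanIdeal {ν ∈ K | convRight η ν = ν} where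
  nonempty := exists_mem_map_eq_self_of_isCompact_convex hK.isCompact hK.convex hK.nonempty
    (convRight η) fun ν hν => hK.convRight_mem η hη ν (hK.isMean ν hν)
  isClosed := hK.isClosed.inter (isClosed_eq (convRight η).continuous continuous_id)
  convex := hK.convex.inter
    (LinearMap.eqLocus (convRight η).toLinearMap LinearMap.id).convex
  isMean ν hν := hK.isMean ν hν.1
  convRight_mem ν hν κ hκ :=
    ⟨hK.convRight_mem ν hν.1 κ hκ, by rw [convRight_convRight, hν.2]⟩

theorem convRight_eq_self_of_minimal (hK : Minimal IsMeanIdeal K)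
    {ν η : WeakDual ℝ (LInf M)} (hν : ν ∈ K) (hη : η ∈ K) : convRight η ν = ν :=
  (hK.2 (hK.1.setOf_convRight_eq_self hη) (sep_subset K _) hν).2

/-- Splitting `2c = (c + f) + (c - f)` writes `μ = μ * μ` as a convex combination of two elements
of `K`, which both equal `μ` by extremality. -/
theorem map_mul_poisson_of_mem_extremePoints (hK : Minimal IsMeanIdeal K)
    {μ : WeakDual ℝ (LInf M)} (hμ : μ ∈ K.extremePoints ℝ) (f h : LInf M) :
    μ (f * poisson μ h) = μ f * μ h := by
  have hmean : IsMean μ := hK.1.isMean μ hμ.1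
  have hidem (x : LInf M) : μ (poisson μ x) = μ x :=
    DFunLike.congr_fun (convRight_eq_self_of_minimal hK hμ.1 hμ.1) x
  obtain ⟨c, hfc⟩ := exists_gt ‖f‖
  have hc : 0 < c := (norm_nonneg f).trans_lt hfc
  have μ_add : μ (c • 1 + f) = c + μ f := by simp [hmean.map_one]
  have μ_sub : μ (c • 1 - f) = c - μ f := by simp [hmean.map_one]
  have hμf := abs_lt.1 ((hmean.abs_le f).trans_lt hfc)
  have hf (y : M) := abs_le.1 ((LInf.abs_apply_le f y).trans hfc.le)
  obtain ⟨ν₁, hν₁, h₁⟩ := hmean.exists_weighted (q := c • 1 + f)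
    (fun y => by simpa [neg_le_iff_add_nonneg'] using (hf y).1) (by rw [μ_add]; linarith)
  obtain ⟨ν₂, hν₂, h₂⟩ := hmean.exists_weighted (q := c • 1 - f)
    (fun y => by simpa using (hf y).2) (by rw [μ_sub]; linarith)
  rw [μ_add] at h₁
  rw [μ_sub] at h₂
  have hseg : μ ∈ openSegment ℝ (convRight μ ν₁) (convRight μ ν₂) := by
    refine ⟨(c + μ f) / (2 * c), (c - μ f) / (2 * c), div_pos (by linarith) (by positivity),
      div_pos (by linarith) (by positivity), by field_simp; ring,
      ContinuousLinearMap.ext fun x => ?_⟩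
    have h_sum : (c + μ f) * ν₁ (poisson μ x) + (c - μ f) * ν₂ (poisson μ x) = 2 * c * μ x := by
      rw [h₁, h₂, ← map_add, ← add_mul, add_add_sub_cancel, ← add_smul, ← two_mul, smul_one_mul,
        map_smul, hidem, smul_eq_mul]
    change (c + μ f) / (2 * c) * ν₁ (poisson μ x) + (c - μ f) / (2 * c) * ν₂ (poisson μ x) = μ x
    rw [div_mul_eq_mul_div, div_mul_eq_mul_div, ← add_div, h_sum,
      mul_div_cancel_left₀ _ (by positivity)]
  have hν₁_eq : convRight μ ν₁ = μ :=
    hμ.2 (hK.1.convRight_mem μ hμ.1 ν₁ hν₁) (hK.1.convRight_mem μ hμ.1 ν₂ hν₂) hseg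
  have := h₁ (poisson μ h)
  rw [← convRight_apply, hν₁_eq, add_mul, add_mul (c • 1), map_add, smul_one_mul, map_smul, hidem,
    smul_eq_mul] at this
  linarith

end IsMeanIdeal

/-- A mean `μ` that behaves like a point of the Furstenberg boundary: `f ↦ P_μ f` maps onto an
algebra of functions on which `μ` is multiplicative. -/
structure IsBoundaryMean (μ : WeakDual ℝ (LInf M)) : Prop extends IsMean μ where
  map_mul_poisson : ∀ f h : LInf M, μ (f * poisson μ h) = μ f * μ h
  convRight_eq_self : ∀ ν, IsMean ν → convRight μ ν = ν → convRight ν μ = μ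

variable (M) in
theorem exists_isBoundaryMean : ∃ μ : WeakDual ℝ (LInf M), IsBoundaryMean μ := by
  have : LocallyConvexSpace ℝ (WeakDual ℝ (LInf M)) :=
    inferInstanceAs (LocallyConvexSpace ℝ (WeakBilin (topDualPairing ℝ (LInf M))))
  obtain ⟨K, hK⟩ := IsMeanIdeal.exists_minimal M
  obtain ⟨μ, hμ⟩ := hK.1.isCompact.extremePoints_nonempty hK.1.nonempty
  refine ⟨μ, hK.1.isMean μ hμ.1, IsMeanIdeal.map_mul_poisson_of_mem_extremePoints hK hμ,
    fun ν hν hνμ => IsMeanIdeal.convRight_eq_self_of_minimal hK hμ.1 ?_⟩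
  rw [← hνμ]
  exact hK.1.convRight_mem μ hμ.1 ν hν

end BoundaryMeans

/-! ### States -/

section States

variable {B : Type*} [CStarAlgebra B] [PartialOrder B] [StarOrderedRing B]

theorem map_mul_eq_of_map_star_mul_self_eq {φ : B →ₚ[ℂ] ℂ} (h_one : φ 1 = 1) {a : B}
    (ha : φ (star a * a) = star (φ a) * φ a) (b : B) : φ (b * a) = φ b * φ a := by
  have deviation_zero : φ (star (a - φ a • 1) * (a - φ a • 1)) = 0 := by
    simp only [star_sub, star_smul, star_one, sub_mul, mul_sub, smul_mul_assoc, mul_smul_comm,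
      one_mul, mul_one, map_sub, map_smul, smul_eq_mul, ha, h_one, map_star φ]
    ring
  have norm_zero : ‖φ.toPreGNS (a - φ a • 1)‖ = 0 := by
    rw [← sq_eq_zero_iff, ← Complex.ofReal_eq_zero, Complex.ofReal_pow, φ.preGNS_norm_sq]
    exact deviation_zero
  have inner_zero := norm_inner_le_norm (𝕜 := ℂ) (φ.toPreGNS (star b)) (φ.toPreGNS (a - φ a • 1))
  rw [norm_zero, mul_zero, norm_le_zero_iff, φ.preGNS_inner_def] at inner_zero
  have : φ (b * (a - φ a • 1)) = 0 := by rw [← inner_zero]; simp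
  rw [mul_sub, mul_smul_comm, mul_one, map_sub, map_smul, smul_eq_mul, sub_eq_zero] at this
  rw [this, mul_comm]

theorem im_apply_eq_zero_of_isSelfAdjoint {φ : B →ₚ[ℂ] ℂ} {a : B} (ha : IsSelfAdjoint a) :
    (φ a).im = 0 :=
  Complex.conj_eq_iff_im.1 <| (map_star φ a).symm.trans (congrArg φ ha.star_eq)

theorem map_mul_eq_of_isSelfAdjoint {φ : B →ₚ[ℂ] ℂ} (h_one : φ 1 = 1) {a : B}
    (ha : IsSelfAdjoint a) (h : φ (a * a) = φ a * φ a) (b : B) : φ (a * b) = φ a * φ b := by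
  have hstar : star (φ a) = φ a := by rw [← map_star φ, ha.star_eq]
  have := map_mul_eq_of_map_star_mul_self_eq h_one (by rwa [ha.star_eq, hstar]) (star b)
  apply_fun star at this
  rwa [← map_star φ, star_mul, ha.star_eq, star_star, star_mul, map_star φ, star_star, hstar]
    at this

/-- The complex-linear functional with real part `r`, where `r` is positive on positive elements
and vanishes on `I • P` for positive `P`. -/
def positiveOfRe (r : B →ₗ[ℝ] ℝ) (h_nonneg : ∀ P, 0 ≤ P → 0 ≤ r P)
    (h_I : ∀ P, 0 ≤ P → r (Complex.I • P) = 0) : B →ₚ[ℂ] ℂ :=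
  .mk₀ (Module.Dual.extendRCLike (𝕜 := ℂ) r) fun P hP => by
    rw [Module.Dual.extendRCLike_apply]
    simpa [h_I P hP] using h_nonneg P hP

@[simp] theorem positiveOfRe_re (r : B →ₗ[ℝ] ℝ) (h_nonneg : ∀ P, 0 ≤ P → 0 ≤ r P)
    (h_I : ∀ P, 0 ≤ P → r (Complex.I • P) = 0) (b : B) :
    (positiveOfRe r h_nonneg h_I b).re = r b :=
  Module.Dual.re_extendRCLike_apply (𝕜 := ℂ) r b

theorem positiveOfRe_one {r : B →ₗ[ℝ] ℝ} (h_one : r 1 = 1) (h_nonneg : ∀ P, 0 ≤ P → 0 ≤ r P)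
    (h_I : ∀ P, 0 ≤ P → r (Complex.I • P) = 0) : positiveOfRe r h_nonneg h_I 1 = 1 := by
  have him : (positiveOfRe r h_nonneg h_I 1).im = 0 :=
    (Complex.nonneg_iff.1 (map_nonneg (positiveOfRe r h_nonneg h_I) zero_le_one)).2.symm
  exact Complex.ext (by simpa using h_one) (by simpa using him)

theorem apply_eq_zero_of_re_smul_eq_zero {E : Type*} [AddCommGroup E] [Module ℂ E]
    {φ : E →ₗ[ℂ] ℂ} {x : E} (h : ∀ c : ℂ, (φ (c • x)).re = 0) : φ x = 0 := by
  have h_re := h 1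
  have h_im := h Complex.I
  simp only [one_smul, map_smul, smul_eq_mul, Complex.I_mul_re, neg_eq_zero] at h_re h_im
  exact Complex.ext h_re h_im

theorem nonneg_of_le_norm {r : B →ₗ[ℝ] ℝ} (h_one : r 1 = 1) (hr : ∀ b, r b ≤ ‖b‖) {P : B}
    (hP : 0 ≤ P) : 0 ≤ r P := by
  have hsub : ‖algebraMap ℝ B ‖P‖ - P‖ ≤ ‖P‖ := by
    rw [CStarAlgebra.norm_le_iff_le_algebraMap _ (norm_nonneg P)
      (sub_nonneg.2 (IsSelfAdjoint.of_nonneg hP).le_algebraMap_norm_self)]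
    exact sub_le_self _ hP
  have := (hr _).trans hsub
  rw [Algebra.algebraMap_eq_smul_one, map_sub, map_smul, h_one, smul_eq_mul, mul_one] at this
  linarith

theorem exists_contractive_extension {A E : Type*} [SeminormedAddCommGroup A] [NormedSpace ℂ A]
    [SeminormedAddCommGroup E] [NormedSpace ℂ E] (π : A →ₗᵢ[ℂ] E) (hπ : Function.Injective π)
    {φ : A →ₗ[ℂ] ℂ} (h_norm : ∀ a, ‖φ a‖ ≤ ‖a‖) :
    ∃ g : E →ₗ[ℂ] ℂ, (∀ a, g (π a) = φ a) ∧ ∀ b, ‖g b‖ ≤ ‖b‖ := by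
  let e := LinearEquiv.ofInjective π.toLinearMap hπ
  have he (a : A) : (e a : E) = π a := rfl
  let ψ : LinearMap.range π.toLinearMap →L[ℂ] ℂ :=
    (φ ∘ₗ e.symm.toLinearMap).mkContinuous 1 fun x => by
      obtain ⟨a, rfl⟩ := e.surjective x
      simpa [he] using h_norm a
  obtain ⟨g, hg, g_norm⟩ := exists_extension_norm_eq (𝕜 := ℂ) _ ψ
  refine ⟨g.toLinearMap, fun a => ?_, fun b => ?_⟩
  · simpa [ψ, he] using hg (e a)
  · have : ‖g‖ ≤ 1 := g_norm.trans_le (LinearMap.mkContinuous_norm_le _ zero_le_one _)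
    simpa using g.le_of_opNorm_le this b

/-- Passing to the real part on self-adjoint elements makes the Hahn–Banach extension hermitian,
and a contractive unital functional is positive. -/
theorem exists_positive_extension {A : Type*} [NormedRing A] [StarRing A] [NormedAlgebra ℂ A]
    (π : A →⋆ₐ[ℂ] B) (hπ : Isometry π) {φ : A →ₗ[ℂ] ℂ} (h_one : φ 1 = 1)
    (h_norm : ∀ a, ‖φ a‖ ≤ ‖a‖) (h_star : ∀ a, φ (star a) = star (φ a)) :
    ∃ θ : B →ₚ[ℂ] ℂ, ∀ a, θ (π a) = φ a := by
  obtain ⟨g, g_apply, g_norm⟩ := exists_contractive_extension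
    { toLinearMap := π.toAlgHom.toLinearMap, norm_map' := hπ.norm_map_of_map_zero (map_zero π) }
    hπ.injective h_norm
  replace g_apply (a : A) : g (π a) = φ a := g_apply a
  let r : B →ₗ[ℝ] ℝ := Complex.reLm ∘ₗ g.restrictScalars ℝ ∘ₗ
    (selfAdjoint.submodule ℝ B).subtype ∘ₗ realPart
  have r_apply (b : B) : r b = (g (realPart b)).re := rfl
  have r_one : r 1 = 1 := by
    have : g 1 = 1 := by rw [← map_one π, g_apply, h_one]
    simp [r_apply, this]
  have r_le (b : B) : r b ≤ ‖b‖ :=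
    (Complex.re_le_norm _).trans ((g_norm _).trans (realPart.norm_le b))
  have r_I (P : B) (hP : 0 ≤ P) : r (Complex.I • P) = 0 := by
    simp [r_apply, realPart_I_smul, (IsSelfAdjoint.of_nonneg hP).imaginaryPart]
  have r_π (a : A) : r (π a) = (φ a).re := by
    rw [r_apply, realPart_apply_coe, ← map_star π, LinearMap.map_smul_of_tower, map_add, g_apply,
      g_apply, h_star]
    simp [← two_mul]
  have r_nonneg (P : B) (hP : 0 ≤ P) : 0 ≤ r P := nonneg_of_le_norm r_one r_le hP
  let θ := positiveOfRe r r_nonneg r_I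
  refine ⟨θ, fun a => sub_eq_zero.1 <| apply_eq_zero_of_re_smul_eq_zero
    (φ := θ.toLinearMap ∘ₗ π.toAlgHom.toLinearMap - φ) fun c => ?_⟩
  rw [LinearMap.sub_apply, Complex.sub_re, sub_eq_zero]
  exact (positiveOfRe_re r r_nonneg r_I (π (c • a))).trans (r_π (c • a))

end States

/-! ### Operators on `ℓ²` -/

section Operators

/-- The bounded operators on `ℓ²(Y)`. -/
abbrev Op (Y : Type*) := ℓ²(Y, ℂ) →L[ℂ] ℓ²(Y, ℂ)

namespace Op

variable {Γ : Type*} [Group Γ] {Y : Type*} [MulAction Γ Y]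

theorem ext {S T : Op Y} (h : ∀ f y, S f y = T f y) : S = T :=
  ContinuousLinearMap.ext fun f => lp.ext (funext (h f))

instance instNontrivial [Nonempty Y] : Nontrivial (Op Y) := by
  classical
  obtain ⟨y⟩ := ‹Nonempty Y›
  have : Nontrivial ℓ²(Y, ℂ) := ⟨lp.single 2 y 1, 0, norm_ne_zero_iff.1 <| by
    rw [lp.norm_single (by norm_num), norm_one]
    exact one_ne_zero⟩
  infer_instance

theorem memℓp_comp_smul (g : Γ) (f : ℓ²(Y, ℂ)) : Memℓp (fun y => f (g • y)) 2 := by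
  have hf := (memℓp_gen_iff (by norm_num)).1 (lp.memℓp f)
  exact memℓp_gen ((MulAction.toPerm g).summable_iff.2 hf)

theorem norm_comp_smul (g : Γ) (f : ℓ²(Y, ℂ)) :
    ‖(⟨fun y => f (g • y), memℓp_comp_smul g f⟩ : ℓ²(Y, ℂ))‖ = ‖f‖ := by
  rw [lp.norm_eq_tsum_rpow (by norm_num) f, lp.norm_eq_tsum_rpow (by norm_num)]
  congr 1
  exact (MulAction.toPerm g).tsum_eq fun y => ‖f y‖ ^ (2 : ℝ≥0∞).toReal

/-- The permutation of coordinates `f ↦ f (g⁻¹ • ·)`. -/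
def permIsometry (g : Γ) : ℓ²(Y, ℂ) ≃ₗᵢ[ℂ] ℓ²(Y, ℂ) where
  toFun f := ⟨fun y => f (g⁻¹ • y), memℓp_comp_smul g⁻¹ f⟩
  invFun f := ⟨fun y => f (g • y), memℓp_comp_smul g f⟩
  map_add' _ _ := rfl
  map_smul' _ _ := rfl
  left_inv f := lp.ext <| funext fun y => congrArg f (inv_smul_smul g y)
  right_inv f := lp.ext <| funext fun y => congrArg f (smul_inv_smul g y)
  norm_map' := norm_comp_smul g⁻¹

variable (Γ Y) in
/-- The permutation representation on `ℓ²(Y)`. -/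
def permRep : Γ →* unitary (Op Y) :=
  MonoidHom.comp (Unitary.linearIsometryEquiv (𝕜 := ℂ) (H := ℓ²(Y, ℂ))).symm.toMonoidHom
    { toFun := permIsometry
      map_one' := LinearIsometryEquiv.ext fun f => lp.ext <| funext fun y =>
        congrArg f (by rw [inv_one, one_smul])
      map_mul' := fun g h => LinearIsometryEquiv.ext fun f => lp.ext <| funext fun y =>
        congrArg f (by rw [mul_inv_rev, mul_smul]) }

@[simp] theorem permRep_apply (g : Γ) (f : ℓ²(Y, ℂ)) (y : Y) :
    (permRep Γ Y g : Op Y) f y = f (g⁻¹ • y) := rfl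

theorem norm_ofReal_mul_apply_le (v : LInf Y) (f : ℓ²(Y, ℂ)) (y : Y) :
    ‖(v y : ℂ) * f y‖ ≤ ‖(‖v‖ • f) y‖ := by
  rw [lp.coeFn_smul, Pi.smul_apply, norm_mul, norm_smul, Complex.norm_real, norm_norm]
  exact mul_le_mul_of_nonneg_right (LInf.abs_apply_le v y) (norm_nonneg _)

/-- The operator of multiplication by a bounded function. -/
def mulOp : LInf Y →ₐ[ℝ] Op Y :=
  AlgHom.ofLinearMap
    { toFun := fun v => LinearMap.mkContinuous
        { toFun := fun f => ⟨fun y => (v y : ℂ) * f y,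
            (lp.memℓp (‖v‖ • f)).mono' (norm_ofReal_mul_apply_le v f)⟩
          map_add' := fun _ _ => lp.ext (funext fun _ => mul_add _ _ _)
          map_smul' := fun _ _ => lp.ext (funext fun _ => mul_left_comm _ _ _) } ‖v‖ fun f => by
        have norm_smul_eq : ‖‖v‖ • f‖ = ‖v‖ * ‖f‖ := by rw [norm_smul, norm_norm]
        rw [← norm_smul_eq]
        exact lp.norm_mono two_ne_zero (norm_ofReal_mul_apply_le v f)
      map_add' := fun v w => ext fun f y => by
        change ((v y + w y : ℝ) : ℂ) * f y = (v y : ℂ) * f y + (w y : ℂ) * f y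
        rw [Complex.ofReal_add, add_mul]
      map_smul' := fun c v => ext fun f y => by
        change ((c * v y : ℝ) : ℂ) * f y = (c : ℂ) * ((v y : ℂ) * f y)
        rw [Complex.ofReal_mul, mul_assoc] }
    (ext fun f y => one_mul (f y))
    fun v w => ext fun f y => by
      change ((v y * w y : ℝ) : ℂ) * f y = (v y : ℂ) * ((w y : ℂ) * f y)
      rw [Complex.ofReal_mul, mul_assoc]

@[simp] theorem mulOp_apply (v : LInf Y) (f : ℓ²(Y, ℂ)) (y : Y) :
    mulOp v f y = (v y : ℂ) * f y := rfl

theorem isSelfAdjoint_mulOp (v : LInf Y) : IsSelfAdjoint (mulOp v) := by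
  rw [ContinuousLinearMap.isSelfAdjoint_iff', eq_comm, ContinuousLinearMap.eq_adjoint_iff]
  intro f f'
  rw [lp.inner_eq_tsum, lp.inner_eq_tsum]
  exact tsum_congr fun y => by simp [mul_left_comm, mul_assoc]

theorem mulOp_nonneg {v : LInf Y} (hv : ∀ y, 0 ≤ v y) : 0 ≤ mulOp v := by
  have bound (y : Y) : |√(v y)| ≤ √‖v‖ := by
    rw [abs_of_nonneg (Real.sqrt_nonneg _)]
    exact Real.sqrt_le_sqrt ((le_abs_self _).trans (LInf.abs_apply_le v y))
  let w := LInf.ofBound (fun y => √(v y)) _ bound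
  have : v = w * w := LInf.ext fun y => (Real.mul_self_sqrt (hv y)).symm
  rw [this, map_mul]
  exact (isSelfAdjoint_mulOp w).mul_self_nonneg

variable (Γ Y) in
/-- Conjugation by the permutation representation. -/
def conj : Γ →* (Op Y ≃⋆ₐ[ℂ] Op Y) := (Unitary.conjStarAlgAut ℂ (Op Y)).comp (permRep Γ Y)

theorem conj_apply (g : Γ) (b : Op Y) :
    conj Γ Y g b = permRep Γ Y g * b * (permRep Γ Y g⁻¹ : Op Y) := by
  rw [map_inv]
  rfl

theorem conj_permRep (g t : Γ) :
    conj Γ Y g (permRep Γ Y t) = (permRep Γ Y (g * t * g⁻¹) : Op Y) := by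
  rw [conj_apply, map_mul, map_mul]
  rfl

theorem conj_mulOp (g : Γ) (v : LInf Y) :
    conj Γ Y g (mulOp v) = mulOp (LInf.comp (g⁻¹ • ·) v) := by
  rw [conj_apply]
  exact ext fun f y => congrArg (_ * f ·) (by rw [inv_inv, smul_inv_smul])

end Op

end Operators

/-! ### Averaged states -/

section AveragedStates

variable {B : Type*} [CStarAlgebra B] [PartialOrder B] [StarOrderedRing B]

/-- The bounded function `g ↦ Re φ(α_{g⁻¹} b)` on `G`. -/
def orbitRe (α : G →* (B ≃⋆ₐ[ℂ] B)) (φ : B →ₚ[ℂ] ℂ) : B →ₗ[ℝ] LInf G where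
  toFun b := LInf.ofBound (fun g => (φ (α g⁻¹ b)).re) (φ.exists_norm_apply_le.choose * ‖b‖)
    fun g => (Complex.abs_re_le_norm _).trans <|
      (φ.exists_norm_apply_le.choose_spec (α g⁻¹ b)).trans_eq <| by
        rw [StarAlgEquiv.norm_map]
  map_add' a b := LInf.ext fun g => by simp
  map_smul' c b := LInf.ext fun g => by
    change (φ (α g⁻¹ (c • b))).re = c * (φ (α g⁻¹ b)).re
    rw [← Complex.coe_smul, map_smul, map_smul, smul_eq_mul, Complex.re_ofReal_mul]

@[simp] theorem orbitRe_apply (α : G →* (B ≃⋆ₐ[ℂ] B)) (φ : B →ₚ[ℂ] ℂ) (b : B) (g : G) :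
    orbitRe α φ b g = (φ (α g⁻¹ b)).re := rfl

/-- The average over `g` with respect to the mean `μ` of the functionals `φ ∘ α_{g⁻¹}`. -/
def averagedState (α : G →* (B ≃⋆ₐ[ℂ] B)) (φ : B →ₚ[ℂ] ℂ) {μ : WeakDual ℝ (LInf G)}
    (hμ : IsMean μ) : B →ₚ[ℂ] ℂ :=
  positiveOfRe ((μ : LInf G →L[ℝ] ℝ).toLinearMap ∘ₗ orbitRe α φ)
    (fun P hP => hμ.nonneg _ fun g =>
      (Complex.nonneg_iff.1 (map_nonneg φ (map_nonneg (α g⁻¹) hP))).1)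
    fun P hP => by
      have : orbitRe α φ (Complex.I • P) = 0 := LInf.ext fun g => by
        have him := (Complex.nonneg_iff.1 (map_nonneg φ (map_nonneg (α g⁻¹) hP))).2
        rw [orbitRe_apply, map_smul, map_smul, smul_eq_mul, Complex.I_mul_re, ← him, neg_zero]
        rfl
      rw [LinearMap.comp_apply, this, map_zero]

variable (α : G →* (B ≃⋆ₐ[ℂ] B)) {φ : B →ₚ[ℂ] ℂ} {μ : WeakDual ℝ (LInf G)} (hμ : IsMean μ)

theorem averagedState_re (φ : B →ₚ[ℂ] ℂ) (b : B) :
    (averagedState α φ hμ b).re = μ (orbitRe α φ b) := positiveOfRe_re _ _ _ _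

theorem averagedState_one (h_one : φ 1 = 1) : averagedState α φ hμ 1 = 1 := by
  refine positiveOfRe_one ?_ _ _
  have : orbitRe α φ 1 = 1 := LInf.ext fun g => by simp [h_one]
  rw [LinearMap.comp_apply, this]
  exact hμ.map_one

theorem averagedState_eq_zero_of_forall_re {b : B} (h : ∀ c : ℂ, μ (orbitRe α φ (c • b)) = 0) :
    averagedState α φ hμ b = 0 :=
  apply_eq_zero_of_re_smul_eq_zero (φ := (averagedState α φ hμ).toLinearMap) fun c =>
    (averagedState_re α hμ φ (c • b)).trans (h c)

theorem poisson_orbitRe (φ : B →ₚ[ℂ] ℂ) (b : B) (g : G) :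
    poisson μ (orbitRe α φ b) g = (averagedState α φ hμ (α g⁻¹ b)).re := by
  rw [averagedState_re, poisson_apply]
  congr 1
  exact LInf.ext fun k => by simp [leftTranslate_apply]

end AveragedStates

/-! ### Poisson transforms of a boundary mean -/

section BoundaryOperators

/-- The stabilizer of a mean under left translations. -/
def meanStabilizer (μ : WeakDual ℝ (LInf G)) : Subgroup G where
  carrier := {t | ∀ f, μ (leftTranslate t f) = μ f}
  mul_mem' {a b} ha hb f := by rw [← leftTranslate_leftTranslate, hb, ha]
  one_mem' f := congrArg μ (LInf.ext fun g => by simp)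
  inv_mem' {a} ha f := by
    rw [← ha, leftTranslate_leftTranslate, inv_mul_cancel]
    exact congrArg μ (LInf.ext fun g => by simp)

theorem map_leftTranslate_of_mem {μ : WeakDual ℝ (LInf G)} {t : G} (ht : t ∈ meanStabilizer μ)
    (f : LInf G) : μ (leftTranslate t f) = μ f := ht f

theorem poisson_apply_mul_of_mem {μ : WeakDual ℝ (LInf G)} {t : G} (ht : t ∈ meanStabilizer μ)
    (f : LInf G) (g : G) : poisson μ f (g * t) = poisson μ f g := by
  rw [poisson_apply, ← leftTranslate_leftTranslate, map_leftTranslate_of_mem ht, poisson_apply]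

/-- The Poisson transform, as a function on the orbit `G ⧸ meanStabilizer μ` of `μ`. -/
def poissonQuot (μ : WeakDual ℝ (LInf G)) : LInf G →ₗ[ℝ] LInf (G ⧸ meanStabilizer μ) where
  toFun f := LInf.ofBound
    (Quotient.lift (poisson μ f) fun a b hab => by
      rw [← poisson_apply_mul_of_mem (QuotientGroup.leftRel_apply.1 hab), mul_inv_cancel_left])
    ‖poisson μ f‖ fun y => Quotient.inductionOn y (LInf.abs_apply_le (poisson μ f))
  map_add' a b := LInf.ext fun y => Quotient.inductionOn y fun g => by
    change poisson μ (a + b) g = poisson μ a g + poisson μ b g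
    rw [map_add, LInf.add_apply]
  map_smul' c a := LInf.ext fun y => Quotient.inductionOn y fun g => by
    change poisson μ (c • a) g = c * poisson μ a g
    rw [map_smul, LInf.smul_apply]

theorem poissonQuot_mk (μ : WeakDual ℝ (LInf G)) (f : LInf G) (g : G) :
    poissonQuot μ f (g : G ⧸ meanStabilizer μ) = poisson μ f g := rfl

theorem poissonQuot_smul (μ : WeakDual ℝ (LInf G)) (f : LInf G) (g : G)
    (y : G ⧸ meanStabilizer μ) :
    poissonQuot μ f (g • y) = poissonQuot μ (leftTranslate g f) y :=
  Quotient.inductionOn y fun k => by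
    change poisson μ f (g * k) = poisson μ (leftTranslate g f) k
    rw [poisson_leftTranslate, leftTranslate_apply]

variable {μ : WeakDual ℝ (LInf G)}

theorem poissonQuot_congr {f h : LInf G} (hfh : poisson μ f = poisson μ h) :
    poissonQuot μ f = poissonQuot μ h :=
  LInf.ext fun y => Quotient.inductionOn y fun g => congrArg (fun v : LInf G => v g) hfh

theorem IsMean.poissonQuot_one (hμ : IsMean μ) : poissonQuot μ 1 = 1 :=
  LInf.ext fun y => Quotient.inductionOn y fun _ => hμ.map_one

theorem IsMean.poissonQuot_nonneg (hμ : IsMean μ) {f : LInf G} (hf : ∀ g, 0 ≤ f g)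
    (y : G ⧸ meanStabilizer μ) : 0 ≤ poissonQuot μ f y :=
  Quotient.inductionOn y fun g => hμ.nonneg _ fun k => hf (g * k)

theorem IsBoundaryMean.map_poisson (hμ : IsBoundaryMean μ) (f : LInf G) :
    μ (poisson μ f) = μ f := by
  simpa [hμ.map_one] using hμ.map_mul_poisson 1 f

theorem IsBoundaryMean.poisson_poisson (hμ : IsBoundaryMean μ) (f : LInf G) :
    poisson μ (poisson μ f) = poisson μ f := LInf.ext fun g => by
  rw [poisson_apply, ← poisson_leftTranslate, hμ.map_poisson, poisson_apply]

theorem IsBoundaryMean.poissonQuot_mul (hμ : IsBoundaryMean μ) (f h : LInf G) :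
    poissonQuot μ f * poissonQuot μ h = poissonQuot μ (f * poisson μ h) :=
  LInf.ext fun y => Quotient.inductionOn y fun g => by
    have : leftTranslate g (f * poisson μ h) =
        leftTranslate g f * poisson μ (leftTranslate g h) := by
      rw [poisson_leftTranslate]
      rfl
    change poisson μ f g * poisson μ h g = poisson μ (f * poisson μ h) g
    rw [poisson_apply, poisson_apply, poisson_apply, this, hμ.map_mul_poisson]

variable {Y : Type*} [MulAction G Y]

/-- The operator on `ℓ²(Y)` of multiplication by the Poisson transform of a function on `G`,
pulled back along a `G`-map `p` from `Y` to the orbit of `μ`. -/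
def poissonOp (p : Y →[G] G ⧸ meanStabilizer μ) : LInf G →ₗ[ℝ] Op Y :=
  Op.mulOp.toLinearMap ∘ₗ (LInf.comp p).toLinearMap ∘ₗ poissonQuot μ

variable (p : Y →[G] G ⧸ meanStabilizer μ)

theorem poissonOp_apply (f : LInf G) (ξ : ℓ²(Y, ℂ)) (y : Y) :
    poissonOp p f ξ y = (poissonQuot μ f (p y) : ℂ) * ξ y := rfl

theorem IsBoundaryMean.poissonOp_poisson (hμ : IsBoundaryMean μ) (f : LInf G) :
    poissonOp p (poisson μ f) = poissonOp p f :=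
  congrArg (Op.mulOp ∘ LInf.comp p) (poissonQuot_congr (hμ.poisson_poisson f))

theorem isSelfAdjoint_poissonOp (f : LInf G) : IsSelfAdjoint (poissonOp p f) :=
  Op.isSelfAdjoint_mulOp _

theorem IsMean.poissonOp_one (hμ : IsMean μ) : poissonOp p 1 = 1 :=
  (congrArg (Op.mulOp ∘ LInf.comp p) hμ.poissonQuot_one).trans (_root_.map_one (Op.mulOp (Y := Y)))

theorem IsMean.poissonOp_nonneg (hμ : IsMean μ) {f : LInf G} (hf : ∀ g, 0 ≤ f g) :
    0 ≤ poissonOp p f :=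
  Op.mulOp_nonneg fun y => hμ.poissonQuot_nonneg hf (p y)

theorem IsBoundaryMean.poissonOp_mul (hμ : IsBoundaryMean μ) (f h : LInf G) :
    poissonOp p f * poissonOp p h = poissonOp p (f * poisson μ h) :=
  (map_mul Op.mulOp _ _).symm.trans <| congrArg (Op.mulOp ∘ LInf.comp p) (hμ.poissonQuot_mul f h)

theorem conj_poissonOp (g : G) (f : LInf G) :
    Op.conj G Y g (poissonOp p f) = poissonOp p (leftTranslate g⁻¹ f) :=
  (Op.conj_mulOp g _).trans <| congrArg Op.mulOp <| LInf.ext fun y =>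
    (congrArg (poissonQuot μ f) (map_smul p g⁻¹ y)).trans (poissonQuot_smul μ f g⁻¹ (p y))

/-- The mean `f ↦ Re φ(poissonOp f)` absorbs `μ` on the right, so by the boundary property it is
absorbed by `μ` on the left, which computes the averaged state. -/
theorem averagedState_poissonOp (hμ : IsBoundaryMean μ) {φ : Op Y →ₚ[ℂ] ℂ} (h_one : φ 1 = 1)
    (f : LInf G) :
    averagedState (Op.conj G Y) φ hμ.toIsMean (poissonOp p f) = μ f := by
  let L : LInf G →ₗ[ℝ] ℝ := Complex.reLm ∘ₗ φ.toLinearMap.restrictScalars ℝ ∘ₗ poissonOp p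
  have L_apply (f : LInf G) : L f = (φ (poissonOp p f)).re := rfl
  let ν := IsMean.ofLinearMap L (by simp [L_apply, hμ.toIsMean.poissonOp_one p, h_one])
    fun f hf => (Complex.nonneg_iff.1 (map_nonneg φ (hμ.toIsMean.poissonOp_nonneg p hf))).1
  have ν_apply (f : LInf G) : ν f = (φ (poissonOp p f)).re := rfl
  have hνμ : convRight μ ν = ν := DFunLike.ext _ _ fun f => by
    rw [convRight_apply, ν_apply, ν_apply, hμ.poissonOp_poisson]
  have orbitRe_eq : orbitRe (Op.conj G Y) φ (poissonOp p f) = poisson ν f := LInf.ext fun g => by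
    rw [orbitRe_apply, conj_poissonOp, inv_inv, poisson_apply, ν_apply]
  apply Complex.ext
  · rw [averagedState_re, orbitRe_eq, ← convRight_apply,
      hμ.convRight_eq_self ν (IsMean.isMean_ofLinearMap _ _ _) hνμ, Complex.ofReal_re]
  · rw [Complex.ofReal_im]
    exact im_apply_eq_zero_of_isSelfAdjoint (isSelfAdjoint_poissonOp p f)

theorem averagedState_poissonOp_mul_self (hμ : IsBoundaryMean μ) {φ : Op Y →ₚ[ℂ] ℂ}
    (h_one : φ 1 = 1) (f : LInf G) :
    averagedState (Op.conj G Y) φ hμ.toIsMean (poissonOp p f * poissonOp p f) = μ f * μ f := by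
  rw [hμ.poissonOp_mul p, averagedState_poissonOp p hμ h_one, hμ.map_mul_poisson,
    Complex.ofReal_mul]

theorem averagedState_poissonOp_mul (hμ : IsBoundaryMean μ) {φ : Op Y →ₚ[ℂ] ℂ}
    (h_one : φ 1 = 1) (f : LInf G) (b : Op Y) :
    averagedState (Op.conj G Y) φ hμ.toIsMean (poissonOp p f * b) =
      μ f * averagedState (Op.conj G Y) φ hμ.toIsMean b := by
  rw [map_mul_eq_of_isSelfAdjoint (averagedState_one _ _ h_one) (isSelfAdjoint_poissonOp p f),
    averagedState_poissonOp p hμ h_one]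
  rw [averagedState_poissonOp_mul_self p hμ h_one, averagedState_poissonOp p hμ h_one]

theorem averagedState_mul_poissonOp (hμ : IsBoundaryMean μ) {φ : Op Y →ₚ[ℂ] ℂ}
    (h_one : φ 1 = 1) (f : LInf G) (b : Op Y) :
    averagedState (Op.conj G Y) φ hμ.toIsMean (b * poissonOp p f) =
      averagedState (Op.conj G Y) φ hμ.toIsMean b * μ f := by
  rw [map_mul_eq_of_map_star_mul_self_eq (averagedState_one _ _ h_one),
    averagedState_poissonOp p hμ h_one]
  rw [isSelfAdjoint_poissonOp p f, averagedState_poissonOp_mul_self p hμ h_one,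
    averagedState_poissonOp p hμ h_one, RCLike.star_def, Complex.conj_ofReal]

theorem permRep_mul_poissonOp (t : G) (f : LInf G) :
    (Op.permRep G Y t : Op Y) * poissonOp p f =
      poissonOp p (leftTranslate t⁻¹ f) * Op.permRep G Y t := by
  have : (Op.permRep G Y t⁻¹ : Op Y) * Op.permRep G Y t = 1 := by
    rw [← Submonoid.coe_mul, ← map_mul, inv_mul_cancel, map_one, Submonoid.coe_one]
  rw [← conj_poissonOp, Op.conj_apply, mul_assoc _ _ (Op.permRep G Y t : Op Y), this, mul_one]

theorem mem_meanStabilizer_of_averagedState_ne_zero (p : Y →[G] G ⧸ meanStabilizer μ)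
    (hμ : IsBoundaryMean μ) {φ : Op Y →ₚ[ℂ] ℂ} (h_one : φ 1 = 1) {t : G}
    (ht : averagedState (Op.conj G Y) φ hμ.toIsMean (Op.permRep G Y t) ≠ 0) :
    t ∈ meanStabilizer μ := by
  refine (Subgroup.inv_mem_iff _).1 fun f => ?_
  have := congrArg (averagedState (Op.conj G Y) φ hμ.toIsMean) (permRep_mul_poissonOp p t f)
  rw [averagedState_mul_poissonOp p hμ h_one, averagedState_poissonOp_mul p hμ h_one,
    mul_comm] at this
  exact_mod_cast (mul_right_cancel₀ ht this).symm

variable (μ) in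
/-- The orbit map of the mean `μ`. -/
def orbitMap : G →[G] G ⧸ meanStabilizer μ where
  toFun := (↑)
  map_smul' _ _ := rfl

variable {φ : Op G →ₚ[ℂ] ℂ}

/-- Where the Poisson transform of `g ↦ Re φ(c λ_{g⁻¹tg})` does not vanish, the point is fixed
by `t`. -/
theorem poissonOp_orbitRe_mul_permRep (hμ : IsBoundaryMean μ) (h_one : φ 1 = 1) (c : ℂ) (t : G) :
    poissonOp (.id G) (orbitRe (Op.conj G G) φ (c • Op.permRep G G t)) *
      (Op.permRep G (G ⧸ meanStabilizer μ) t : Op (G ⧸ meanStabilizer μ)) =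
    poissonOp (.id G) (orbitRe (Op.conj G G) φ (c • Op.permRep G G t)) := by
  refine Op.ext fun ξ y => ?_
  induction y using QuotientGroup.induction_on with | H g => ?_
  rw [mul_apply_eq_comp, poissonOp_apply, poissonOp_apply, Op.permRep_apply]
  rcases eq_or_ne (averagedState (Op.conj G G) φ hμ.toIsMean (Op.permRep G G (g⁻¹ * t * g)))
    0 with h | h
  · have : poisson μ (orbitRe (Op.conj G G) φ (c • Op.permRep G G t)) g = 0 := by
      rw [poisson_orbitRe _ hμ.toIsMean, map_smul, Op.conj_permRep, inv_inv, map_smul, h]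
      simp
    simp [poissonQuot_mk, this]
  · have : t⁻¹ • (g : G ⧸ meanStabilizer μ) = g := by
      rw [inv_smul_eq_iff, MulAction.Quotient.smul_mk, QuotientGroup.eq, smul_eq_mul, ← mul_assoc]
      exact mem_meanStabilizer_of_averagedState_ne_zero (orbitMap μ) hμ h_one h
    rw [this]

theorem averagedState_permRep_eq_zero_of_forall_ne_one (hμ : IsMean μ) {θ : Op Y →ₚ[ℂ] ℂ}
    (hθ : ∀ s : G, s ≠ 1 → θ (Op.permRep G Y s) = 0) {t : G} (ht : t ≠ 1) :
    averagedState (Op.conj G Y) θ hμ (Op.permRep G Y t) = 0 := by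
  refine averagedState_eq_zero_of_forall_re _ _ fun c => ?_
  have : orbitRe (Op.conj G Y) θ (c • Op.permRep G Y t) = 0 := LInf.ext fun g => by
    have conj_ne_one : g⁻¹ * t * g⁻¹⁻¹ ≠ 1 := conj_eq_one_iff.not.2 ht
    rw [orbitRe_apply, map_smul, Op.conj_permRep, map_smul, hθ _ conj_ne_one, smul_zero]
    rfl
  rw [this, map_zero]

theorem averagedState_permRep_eq_zero (hμ : IsBoundaryMean μ) (h_one : φ 1 = 1)
    {θ : Op (G ⧸ meanStabilizer μ) →ₚ[ℂ] ℂ} (θ_one : θ 1 = 1)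
    (hθ : ∀ s : G, s ≠ 1 → θ (Op.permRep G (G ⧸ meanStabilizer μ) s) = 0) {t : G}
    (ht : t ≠ 1) :
    averagedState (Op.conj G G) φ hμ.toIsMean (Op.permRep G G t) = 0 := by
  refine averagedState_eq_zero_of_forall_re _ _ fun c => ?_
  have := averagedState_poissonOp_mul (MulActionHom.id G) hμ θ_one
    (orbitRe (Op.conj G G) φ (c • Op.permRep G G t)) (Op.permRep G (G ⧸ meanStabilizer μ) t)
  rw [poissonOp_orbitRe_mul_permRep hμ h_one, averagedState_poissonOp _ hμ θ_one,
    averagedState_permRep_eq_zero_of_forall_ne_one hμ.toIsMean hθ ht, mul_zero] at this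
  exact_mod_cast this

end BoundaryOperators

/-! ### Reiter's condition -/

section Reiter

/-- Day's convexity argument: a functional separating `0` from the convex hull would yield bounded
functions `f_h` with `∑ h, (f_h (h * ·) - f_h)` bounded below by a positive constant, although the
mean `μ` of this sum is zero. -/
theorem zero_mem_closure_convexHull_translate_sub {μ : WeakDual ℝ (LInf G)} (hμ : IsMean μ)
    {E : Type*} [NormedAddCommGroup E] [NormedSpace ℝ E] {u : G → E} {C : ℝ}
    (hu : ∀ g, ‖u g‖ ≤ C) {F : Finset G} (hF : ∀ h ∈ F, h ∈ meanStabilizer μ) :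
    (0 : F → E) ∈ closure (convexHull ℝ (range fun g (h : F) => u (h * g) - u g)) := by
  classical
  by_contra h_zero
  obtain ⟨L, s, hs, hL⟩ := geometric_hahn_banach_point_closed
    (convex_convexHull ℝ _).closure isClosed_closure h_zero
  rw [map_zero] at hs
  let f (h : F) : LInf G := LInf.ofBound (fun g => L (Pi.single h (u g))) (‖L‖ * C) fun g =>
    (L.le_opNorm _).trans <| by
      rw [Pi.norm_single]
      exact mul_le_mul_of_nonneg_left (hu g) (norm_nonneg L)
  have sum_apply (g : G) : (∑ h : F, (leftTranslate (h : G) (f h) - f h)) g =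
      L fun h => u (h * g) - u g := by
    rw [lp.coeFn_sum, Finset.sum_apply, ← Finset.univ_sum_single fun h : F => u (h * g) - u g,
      map_sum]
    exact Finset.sum_congr rfl fun h _ => by rw [Pi.single_sub, map_sub]; rfl
  have sum_mean : μ (∑ h : F, (leftTranslate (h : G) (f h) - f h)) = 0 := by
    rw [map_sum]
    exact Finset.sum_eq_zero fun h _ => by
      rw [map_sub, map_leftTranslate_of_mem (hF h h.2), sub_self]
  have lower_bound := hμ.mono (f := s • 1) fun g => by
    rw [sum_apply, LInf.smul_apply, LInf.one_apply, mul_one]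
    exact (hL _ (subset_closure (subset_convexHull ℝ _ ⟨g, rfl⟩))).le
  rw [sum_mean, map_smul, hμ.map_one, smul_eq_mul, mul_one] at lower_bound
  exact hs.not_ge lower_bound

theorem exists_retraction (H : Subgroup G) :
    ∃ κ : G → G, (∀ g, κ g ∈ H) ∧ ∀ h ∈ H, ∀ g, κ (h * g) = h * κ g := by
  refine ⟨fun g => g * Quotient.out ((g⁻¹ : G) : G ⧸ H), fun g => ?_, fun h hh g => ?_⟩
  · simpa using QuotientGroup.eq.1 (Quotient.out_eq' ((g⁻¹ : G) : G ⧸ H)).symm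
  · have : (((h * g)⁻¹ : G) : G ⧸ H) = ((g⁻¹ : G) : G ⧸ H) := by
      rw [QuotientGroup.eq]
      simpa using hh
    simp only [this, mul_assoc]

/-- Left translation `p ↦ p (g⁻¹ * ·)` on `ℓ¹(G)`. -/
def l1Translate (g : G) : ℓ¹(G, ℝ) →ₗ[ℝ] ℓ¹(G, ℝ) where
  toFun p := ⟨fun y => p (g⁻¹ * y), memℓp_gen <|
    (Equiv.mulLeft g⁻¹).summable_iff.2 ((memℓp_gen_iff (by norm_num)).1 (lp.memℓp p))⟩
  map_add' _ _ := rfl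
  map_smul' _ _ := rfl

theorem l1Translate_apply (g : G) (p : ℓ¹(G, ℝ)) (y : G) : l1Translate g p y = p (g⁻¹ * y) := rfl

theorem l1Translate_single [DecidableEq G] (g h : G) :
    l1Translate g (lp.single 1 h 1) = lp.single 1 (g * h) 1 := lp.ext <| funext fun y => by
  rw [l1Translate_apply, lp.single_apply, lp.single_apply, Pi.single_apply, Pi.single_apply]
  exact if_congr inv_mul_eq_iff_eq_mul rfl rfl

theorem hasSum_one_of_mem_convexHull_single {Y : Type*} [DecidableEq Y] {S : Set Y} {p : ℓ¹(Y, ℝ)}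
    (hp : p ∈ convexHull ℝ ((fun y => lp.single 1 y (1 : ℝ)) '' S)) :
    (∀ y, 0 ≤ p y) ∧ (∀ y ∉ S, p y = 0) ∧ HasSum (fun y => p y) 1 := by
  refine convexHull_min (t := {p : ℓ¹(Y, ℝ) | (∀ y, 0 ≤ p y) ∧ (∀ y ∉ S, p y = 0) ∧
    HasSum (fun y => p y) 1}) ?_ ?_ hp
  · rintro _ ⟨x, hx, rfl⟩
    simp only [mem_ofPred_eq, lp.single_apply, Pi.single_apply]
    refine ⟨fun y => by split_ifs <;> norm_num, fun y hy => if_neg ?_, hasSum_ite_eq x 1⟩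
    rintro rfl
    exact hy hx
  · rintro p ⟨p_nonneg, p_supp, p_sum⟩ q ⟨q_nonneg, q_supp, q_sum⟩ a b ha hb hab
    refine ⟨fun y => ?_, fun y hy => ?_, ?_⟩
    · exact add_nonneg (mul_nonneg ha (p_nonneg y)) (mul_nonneg hb (q_nonneg y))
    · change a * p y + b * q y = 0
      rw [p_supp y hy, q_supp y hy, mul_zero, mul_zero, add_zero]
    · have := (p_sum.mul_left a).add (q_sum.mul_left b)
      rwa [mul_one, mul_one, hab] at this

theorem exists_l1_almost_invariant {μ : WeakDual ℝ (LInf G)} (hμ : IsMean μ) {F : Finset G}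
    (hF : ∀ h ∈ F, h ∈ meanStabilizer μ) {ε : ℝ} (hε : 0 < ε) :
    ∃ p : ℓ¹(G, ℝ), (∀ g, 0 ≤ p g) ∧ (∀ g ∉ meanStabilizer μ, p g = 0) ∧
      HasSum (fun g => p g) 1 ∧ ∀ h ∈ F, ‖l1Translate h p - p‖ < ε := by
  classical
  obtain ⟨κ, κ_mem, κ_mul⟩ := exists_retraction (meanStabilizer μ)
  let δ (g : G) : ℓ¹(G, ℝ) := lp.single 1 g 1
  let Λ : ℓ¹(G, ℝ) →ₗ[ℝ] (F → ℓ¹(G, ℝ)) :=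
    LinearMap.pi fun h => l1Translate (h : G) - LinearMap.id
  have h_zero := zero_mem_closure_convexHull_translate_sub hμ
    (u := δ ∘ κ) (C := 1)
    (fun g => by rw [Function.comp_apply, lp.norm_single (by norm_num), norm_one]) hF
  have h_range : (range fun g (h : F) => (δ ∘ κ) (h * g) - (δ ∘ κ) g) = Λ '' range (δ ∘ κ) := by
    rw [← range_comp]
    refine congrArg range (funext fun g => funext fun h => ?_)
    simp only [Function.comp_apply, κ_mul h (hF h h.2), δ, ← l1Translate_single]
    rfl
  rw [h_range, ← LinearMap.image_convexHull] at h_zero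
  obtain ⟨_, ⟨p, hp, rfl⟩, hdist⟩ := Metric.mem_closure_iff.1 h_zero ε hε
  obtain ⟨p_nonneg, p_supp, p_sum⟩ := hasSum_one_of_mem_convexHull_single <|
    convexHull_mono (t := δ '' (meanStabilizer μ : Set G))
      (range_subset_iff.2 fun g => ⟨κ g, κ_mem g, rfl⟩) hp
  refine ⟨p, p_nonneg, p_supp, p_sum, fun h hh => ?_⟩
  rw [dist_zero_left] at hdist
  exact (norm_le_pi_norm (Λ p) ⟨h, hh⟩).trans_lt hdist

theorem sq_sqrt_sub_sqrt_le_abs_sub {a b : ℝ} (ha : 0 ≤ a) (hb : 0 ≤ b) :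
    (√a - √b) ^ 2 ≤ |a - b| :=
  calc (√a - √b) ^ 2 = |√a - √b| * |√a - √b| := by rw [← sq, sq_abs]
    _ ≤ |√a - √b| * |√a + √b| := mul_le_mul_of_nonneg_left
        ((abs_sub _ _).trans_eq <| by
          rw [abs_of_nonneg (Real.sqrt_nonneg a), abs_of_nonneg (Real.sqrt_nonneg b),
            abs_of_nonneg (by positivity)]) (abs_nonneg _)
    _ = |a - b| := by
      rw [← abs_mul, mul_comm, ← sq_sub_sq, Real.sq_sqrt ha, Real.sq_sqrt hb]

theorem hasSum_norm_sq {Y : Type*} (f : ℓ²(Y, ℂ)) : HasSum (fun y => ‖f y‖ ^ 2) (‖f‖ ^ 2) := by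
  simpa using lp.hasSum_norm (p := 2) (by norm_num) f

theorem hasSum_abs {Y : Type*} (p : ℓ¹(Y, ℝ)) : HasSum (fun y => |p y|) ‖p‖ := by
  simpa using lp.hasSum_norm (p := 1) (by norm_num) p

theorem exists_l2_almost_invariant {μ : WeakDual ℝ (LInf G)} (hμ : IsMean μ) {F : Finset G}
    (hF : ∀ h ∈ F, h ∈ meanStabilizer μ) {ε : ℝ} (hε : 0 < ε) :
    ∃ ξ : ℓ²(G, ℂ), ‖ξ‖ = 1 ∧ (∀ g ∉ meanStabilizer μ, ξ g = 0) ∧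
      ∀ h ∈ F, ‖(Op.permRep G G h : Op G) ξ - ξ‖ < ε := by
  obtain ⟨p, p_nonneg, p_supp, p_sum, p_inv⟩ := exists_l1_almost_invariant hμ hF (pow_pos hε 2)
  have norm_sqrt_sq (g : G) : ‖(√(p g) : ℂ)‖ ^ 2 = p g := by
    rw [Complex.norm_real, Real.norm_eq_abs, sq_abs, Real.sq_sqrt (p_nonneg g)]
  let ξ : ℓ²(G, ℂ) := ⟨fun g => (√(p g) : ℂ), memℓp_gen <| by
    simpa only [ENNReal.toReal_ofNat, Real.rpow_ofNat, norm_sqrt_sq] using p_sum.summable⟩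
  refine ⟨ξ, ?_, fun g hg => ?_, fun h hh => lt_of_pow_lt_pow_left₀ 2 hε.le ?_⟩
  · have norm_sq : ‖ξ‖ ^ 2 = 1 :=
      (hasSum_norm_sq ξ).unique (by simpa only [ξ, norm_sqrt_sq] using p_sum)
    exact (pow_eq_one_iff_of_nonneg (norm_nonneg ξ) two_ne_zero).1 norm_sq
  · change (√(p g) : ℂ) = 0
    rw [p_supp g hg, Real.sqrt_zero, Complex.ofReal_zero]
  · refine (hasSum_le (fun y => ?_) (hasSum_norm_sq _) (hasSum_abs _)).trans_lt (p_inv h hh)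
    change ‖(√(p (h⁻¹ * y)) : ℂ) - (√(p y) : ℂ)‖ ^ 2 ≤ |p (h⁻¹ * y) - p y|
    rw [← Complex.ofReal_sub, Complex.norm_real, Real.norm_eq_abs, sq_abs]
    exact sq_sqrt_sub_sqrt_le_abs_sub (p_nonneg _) (p_nonneg _)

end Reiter

/-! ### Weak containment -/

section WeakContainment

/-- The linear extension of a unitary representation to the complex group algebra. -/
def groupAlgebraLift {B : Type*} [Ring B] [StarRing B] [Algebra ℂ B] (ρ : G →* unitary B) :
    MonoidAlgebra ℂ G →ₐ[ℂ] B :=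
  MonoidAlgebra.lift ℂ B G ((unitary B).subtype.comp ρ)

@[simp] theorem groupAlgebraLift_single {B : Type*} [Ring B] [StarRing B] [Algebra ℂ B]
    (ρ : G →* unitary B) (g : G) (c : ℂ) :
    groupAlgebraLift ρ (MonoidAlgebra.single g c) = c • (ρ g : B) :=
  MonoidAlgebra.lift_single _ _ _

theorem star_coe_map {B : Type*} [Ring B] [StarRing B] (ρ : G →* unitary B) (g : G) :
    star (ρ g : B) = ρ g⁻¹ := by
  rw [map_inv]
  rfl

theorem exists_starAlgHom_of_norm_groupAlgebraLift_le {A B : Type*}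
    [NormedRing A] [StarRing A] [ContinuousStar A] [NormedAlgebra ℂ A] [StarModule ℂ A]
    [NormedRing B] [StarRing B] [ContinuousStar B] [NormedAlgebra ℂ B] [StarModule ℂ B]
    [CompleteSpace B] {ρ : G →* unitary A} (hρ : DenseRange (groupAlgebraLift ρ))
    {σ : G →* unitary B} (h : ∀ c, ‖groupAlgebraLift σ c‖ ≤ ‖groupAlgebraLift ρ c‖) :
    ∃ π : A →⋆ₐ[ℂ] B, ∀ g, π (ρ g) = σ g := by
  let π : A →L[ℂ] B :=
    (groupAlgebraLift σ).toLinearMap.extendOfNorm (groupAlgebraLift ρ).toLinearMap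
  have π_lift (c : MonoidAlgebra ℂ G) : π (groupAlgebraLift ρ c) = groupAlgebraLift σ c :=
    LinearMap.extendOfNorm_eq hρ ⟨1, fun c => (h c).trans_eq (one_mul _).symm⟩ c
  have π_one : π 1 = 1 := by simpa only [map_one] using π_lift 1
  have π_mul (a b : A) : π (a * b) = π a * π b := by
    refine hρ.induction_on₂ (isClosed_eq (by fun_prop) (by fun_prop)) (fun c d => ?_) a b
    rw [← map_mul, π_lift, π_lift, π_lift, map_mul]
  have π_rep (g : G) : π (ρ g) = σ g := by
    simpa only [groupAlgebraLift_single, one_smul] using π_lift (MonoidAlgebra.single g 1)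
  have π_star (a : A) : π (star a) = star (π a) := by
    refine hρ.induction_on a (isClosed_eq (by fun_prop) (by fun_prop)) fun c => ?_
    induction c using MonoidAlgebra.induction_linear with
    | zero => simp only [map_zero, star_zero]
    | add c d hc hd => simp only [map_add, star_add, hc, hd]
    | single g c => simp only [groupAlgebraLift_single, star_smul, map_smul, star_coe_map, π_rep]
  exact ⟨{ AlgHom.ofLinearMap (π : A →ₗ[ℂ] B) π_one π_mul with map_star' := π_star }, π_rep⟩

variable {H K : Type*} [NormedAddCommGroup H] [InnerProductSpace ℂ H] [CompleteSpace H]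
  [NormedAddCommGroup K] [InnerProductSpace ℂ K] [CompleteSpace K]

local notation "⟪" x ", " y "⟫" => inner ℂ x y

theorem inner_map_map (ρ : G →* unitary (H →L[ℂ] H)) (g h : G) (ξ : H) :
    ⟪(ρ g : H →L[ℂ] H) ξ, (ρ h : H →L[ℂ] H) ξ⟫ = ⟪ξ, (ρ (g⁻¹ * h) : H →L[ℂ] H) ξ⟫ := by
  rw [← ContinuousLinearMap.adjoint_inner_right, ← ContinuousLinearMap.star_eq_adjoint,
    star_coe_map, map_mul]
  rfl

variable {ρ : G →* unitary (H →L[ℂ] H)} {σ : G →* unitary (K →L[ℂ] K)} {ι : Type*} {l : Filter ι}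
  {ξ : ι → H} {η : K}

theorem tendsto_inner_groupAlgebraLift
    (h : ∀ g, Tendsto (fun i => ⟪ξ i, (ρ g : H →L[ℂ] H) (ξ i)⟫) l (𝓝 ⟪η, (σ g : K →L[ℂ] K) η⟫))
    (a b : MonoidAlgebra ℂ G) :
    Tendsto (fun i => ⟪groupAlgebraLift ρ a (ξ i), groupAlgebraLift ρ b (ξ i)⟫) l
      (𝓝 ⟪groupAlgebraLift σ a η, groupAlgebraLift σ b η⟫) := by
  induction a using MonoidAlgebra.induction_linear with
  | zero => simpa using tendsto_const_nhds
  | add a a' ha ha' => simpa [inner_add_left] using ha.add ha'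
  | single g c =>
    induction b using MonoidAlgebra.induction_linear with
    | zero => simpa using tendsto_const_nhds
    | add b b' hb hb' => simpa only [map_add, add_apply, inner_add_right] using hb.add hb'
    | single g' c' =>
      simpa only [groupAlgebraLift_single, smul_apply, inner_smul_left, inner_smul_right,
        inner_map_map] using ((h (g⁻¹ * g')).const_mul _).const_mul _

/-- If the positive definite function of a cyclic vector of `σ` is a pointwise limit of positive
definite functions of vectors of `ρ`, then `σ` is weakly contained in `ρ`. -/
theorem norm_groupAlgebraLift_le_of_tendsto [l.NeBot]
    (h : ∀ g, Tendsto (fun i => ⟪ξ i, (ρ g : H →L[ℂ] H) (ξ i)⟫) l (𝓝 ⟪η, (σ g : K →L[ℂ] K) η⟫))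
    (hη : DenseRange fun a => groupAlgebraLift σ a η) (c : MonoidAlgebra ℂ G) :
    ‖groupAlgebraLift σ c‖ ≤ ‖groupAlgebraLift ρ c‖ := by
  have tendsto_norm (a : MonoidAlgebra ℂ G) :
      Tendsto (fun i => ‖groupAlgebraLift ρ a (ξ i)‖) l (𝓝 ‖groupAlgebraLift σ a η‖) := by
    simp only [norm_eq_sqrt_re_inner (𝕜 := ℂ)]
    exact (Real.continuous_sqrt.tendsto _).comp <|
      (Complex.continuous_re.tendsto _).comp (tendsto_inner_groupAlgebraLift h a a)
  refine ContinuousLinearMap.opNorm_le_bound _ (norm_nonneg _) fun x =>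
    hη.induction_on x (isClosed_le (by fun_prop) (by fun_prop)) fun a => ?_
  have norm_le (i : ι) : ‖groupAlgebraLift ρ (c * a) (ξ i)‖ ≤
      ‖groupAlgebraLift ρ c‖ * ‖groupAlgebraLift ρ a (ξ i)‖ := by
    rw [map_mul]
    exact (groupAlgebraLift ρ c).le_opNorm _
  simpa only [map_mul, mul_apply_eq_comp] using
    le_of_tendsto_of_tendsto' (tendsto_norm (c * a)) ((tendsto_norm a).const_mul _) norm_le

end WeakContainment

section QuasiRegular

variable {Y : Type*} [MulAction G Y]

theorem permRep_single [DecidableEq Y] (g : G) (y : Y) (c : ℂ) :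
    (Op.permRep G Y g : Op Y) (lp.single 2 y c) = lp.single 2 (g • y) c :=
  lp.ext <| funext fun x => by
    rw [Op.permRep_apply, lp.single_apply, lp.single_apply, Pi.single_apply, Pi.single_apply]
    exact if_congr inv_smul_eq_iff rfl rfl

theorem denseRange_groupAlgebraLift_permRep_single [DecidableEq Y] [MulAction.IsPretransitive G Y]
    (y : Y) : DenseRange fun a => groupAlgebraLift (Op.permRep G Y) a (lp.single 2 y (1 : ℂ)) := by
  let orbitMap : MonoidAlgebra ℂ G →ₗ[ℂ] ℓ²(Y, ℂ) :=
    (ContinuousLinearMap.apply ℂ _ (lp.single 2 y (1 : ℂ))).toLinearMap ∘ₗ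
      (groupAlgebraLift (Op.permRep G Y)).toLinearMap
  intro x
  refine mem_closure_of_tendsto (lp.hasSum_single (by norm_num) x) <| Eventually.of_forall fun s =>
    (LinearMap.range orbitMap).sum_mem fun z _ => ?_
  obtain ⟨g, rfl⟩ := MulAction.exists_smul_eq G y z
  refine ⟨MonoidAlgebra.single g (x (g • y)), ?_⟩
  change groupAlgebraLift (Op.permRep G Y) (MonoidAlgebra.single g (x (g • y))) _ = _
  rw [groupAlgebraLift_single, smul_apply, permRep_single, ← lp.single_smul,
    smul_eq_mul, mul_one]

theorem inner_permRep_eq_zero {K : Subgroup G} {ξ : ℓ²(G, ℂ)} (hξ : ∀ g ∉ K, ξ g = 0) {t : G}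
    (ht : t ∉ K) : inner ℂ ξ ((Op.permRep G G t : Op G) ξ) = 0 := by
  refine (lp.inner_eq_tsum _ _).trans ((tsum_congr fun g => ?_).trans tsum_zero)
  by_cases hg : g ∈ K
  · rw [Op.permRep_apply, hξ (t⁻¹ • g) fun htg => ht ?_, inner_zero_right]
    simpa using K.mul_mem hg (K.inv_mem htg)
  · rw [hξ g hg, inner_zero_left]

theorem norm_inner_sub_one_le {H : Type*} [NormedAddCommGroup H] [InnerProductSpace ℂ H] {x : H}
    (hx : ‖x‖ = 1) (y : H) : ‖inner ℂ x y - 1‖ ≤ ‖y - x‖ := by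
  have : inner ℂ x y - 1 = inner ℂ x (y - x) := by
    rw [inner_sub_right, inner_self_eq_norm_sq_to_K, hx]
    simp
  simpa only [this, hx, one_mul] using norm_inner_le_norm (𝕜 := ℂ) x (y - x)

theorem exists_tendsto_l2_almost_invariant {μ : WeakDual ℝ (LInf G)} (hμ : IsMean μ) :
    ∃ ξ : Finset (meanStabilizer μ) × ℕ → ℓ²(G, ℂ), (∀ i, ‖ξ i‖ = 1) ∧
      (∀ i, ∀ g ∉ meanStabilizer μ, ξ i g = 0) ∧
      ∀ t ∈ meanStabilizer μ,
        Tendsto (fun i => ‖(Op.permRep G G t : Op G) (ξ i) - ξ i‖) atTop (𝓝 0) := by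
  have exists_ξ (i : Finset (meanStabilizer μ) × ℕ) :=
    exists_l2_almost_invariant hμ (F := i.1.map (.subtype _))
      (fun h hh => by obtain ⟨h, -, rfl⟩ := Finset.mem_map.1 hh; exact h.2)
      (Nat.one_div_pos_of_nat (α := ℝ) (n := i.2))
  choose ξ norm_ξ supp_ξ inv_ξ using exists_ξ
  refine ⟨ξ, norm_ξ, supp_ξ, fun t ht => squeeze_zero' (.of_forall fun _ => norm_nonneg _) ?_
    (tendsto_one_div_add_atTop_nhds_zero_nat.comp (tendsto_snd.mono_left
      (prod_atTop_atTop_eq (α := Finset (meanStabilizer μ)) (β := ℕ)).ge))⟩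
  filter_upwards [eventually_ge_atTop ({⟨t, ht⟩}, 0)] with i hi
  exact (inv_ξ i t (Finset.mem_map.2 ⟨⟨t, ht⟩, hi.1 (Finset.mem_singleton_self _), rfl⟩)).le

theorem norm_groupAlgebraLift_quotient_le {μ : WeakDual ℝ (LInf G)} (hμ : IsMean μ)
    (c : MonoidAlgebra ℂ G) :
    ‖groupAlgebraLift (Op.permRep G (G ⧸ meanStabilizer μ)) c‖ ≤
      ‖groupAlgebraLift (Op.permRep G G) c‖ := by
  classical
  obtain ⟨ξ, norm_ξ, supp_ξ, inv_ξ⟩ := exists_tendsto_l2_almost_invariant hμ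
  refine norm_groupAlgebraLift_le_of_tendsto (l := atTop) (ξ := ξ) (fun t => ?_)
    (denseRange_groupAlgebraLift_permRep_single ((1 : G) : G ⧸ meanStabilizer μ)) c
  have mem_iff : ((1 : G) : G ⧸ meanStabilizer μ) = t • ((1 : G) : G ⧸ meanStabilizer μ) ↔
      t ∈ meanStabilizer μ := by
    rw [MulAction.Quotient.smul_coe, QuotientGroup.eq]
    simp
  rw [permRep_single, lp.inner_single_left, lp.single_apply, Pi.single_apply]
  simp only [mem_iff]
  split_ifs with ht
  · rw [inner_self_eq_norm_sq_to_K, norm_one, RCLike.ofReal_one, one_pow]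
    exact tendsto_iff_norm_sub_tendsto_zero.2 <| squeeze_zero (fun _ => norm_nonneg _)
      (fun i => norm_inner_sub_one_le (norm_ξ i) _) (inv_ξ t ht)
  · rw [inner_zero_right]
    exact tendsto_const_nhds.congr fun i => (inner_permRep_eq_zero (supp_ξ i) ht).symm

end QuasiRegular

/-! ### The reduced C*-algebra -/

section ReducedCstar

theorem lreg_eq_permRep (g : G) : lreg g = (Op.permRep G G g : Op G) :=
  Op.ext fun f y => by
    unfold lreg lregE
    rfl

theorem coe_uu (g : G) : (uu g : Op G) = Op.permRep G G g := by
  unfold uu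
  exact lreg_eq_permRep g

variable (G) in
/-- The left regular representation as a unitary representation in `C*_λ(G)`. -/
def regRep : G →* unitary (redCstar G) where
  toFun g := ⟨uu g, Unitary.mem_iff.2
    ⟨Subtype.ext <| by
      change star (uu g : Op G) * uu g = 1
      rw [coe_uu, Unitary.star_mul_self_of_mem (Subtype.mem _)],
    Subtype.ext <| by
      change (uu g : Op G) * star (uu g : Op G) = 1
      rw [coe_uu, Unitary.mul_star_self_of_mem (Subtype.mem _)]⟩⟩
  map_one' := Subtype.ext <| Subtype.ext <| by simp [coe_uu]
  map_mul' g h := Subtype.ext <| Subtype.ext <| by simp [coe_uu]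

theorem coe_groupAlgebraLift_regRep (c : MonoidAlgebra ℂ G) :
    (groupAlgebraLift (regRep G) c : Op G) = groupAlgebraLift (Op.permRep G G) c := by
  induction c using MonoidAlgebra.induction_linear with
  | zero => simp only [map_zero, ZeroMemClass.coe_zero]
  | add c d hc hd => simp only [map_add, AddMemClass.coe_add, hc, hd]
  | single g c =>
    rw [groupAlgebraLift_single, groupAlgebraLift_single, ← coe_uu]
    rfl

theorem adjoin_range_lreg_le :
    (StarAlgebra.adjoin ℂ (range (lreg (G := G)))).toSubalgebra ≤
      (groupAlgebraLift (Op.permRep G G)).range := by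
  have star_range : star (range (lreg (G := G))) ⊆ range (lreg (G := G)) := by
    rintro x ⟨g, hg⟩
    refine ⟨g⁻¹, ?_⟩
    rw [← star_star x, ← hg, lreg_eq_permRep, lreg_eq_permRep, star_coe_map]
  rw [StarAlgebra.adjoin_toSubalgebra, union_eq_left.2 star_range, Algebra.adjoin_le_iff]
  rintro _ ⟨g, rfl⟩
  exact ⟨MonoidAlgebra.single g 1,
    (groupAlgebraLift_single _ g 1).trans (by rw [one_smul, lreg_eq_permRep])⟩

theorem isClosed_redCstar : IsClosed (redCstar G : Set (Op G)) := by
  unfold redCstar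
  exact StarSubalgebra.isClosed_topologicalClosure _

theorem redCstar_subset_closure :
    (redCstar G : Set (Op G)) ⊆ closure (range (groupAlgebraLift (Op.permRep G G))) := by
  unfold redCstar
  rw [StarSubalgebra.topologicalClosure_coe]
  exact closure_mono adjoin_range_lreg_le

theorem denseRange_groupAlgebraLift_regRep : DenseRange (groupAlgebraLift (regRep G)) := by
  intro a
  rw [closure_subtype, ← range_comp]
  convert redCstar_subset_closure a.2 using 3
  exact funext coe_groupAlgebraLift_regRep

theorem eq_on_redCstar {E : Type*} [NormedAddCommGroup E] [NormedSpace ℂ E] {S T : Op G →L[ℂ] E}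
    (h : ∀ g : G, S (Op.permRep G G g : Op G) = T (Op.permRep G G g : Op G)) (a : redCstar G) :
    S a = T a := by
  refine EqOn.closure (fun _ => ?_) S.continuous T.continuous (redCstar_subset_closure a.2)
  rintro ⟨c, rfl⟩
  induction c using MonoidAlgebra.induction_linear with
  | zero => simp only [map_zero]
  | add c d hc hd => simp only [map_add, hc, hd]
  | single g c => simp only [groupAlgebraLift_single, map_smul, h]

variable (G) in
/-- The vector functional of `δ_e`, which extends the canonical trace to all bounded operators. -/
def canonicalTrace : Op G →L[ℂ] ℂ :=
  (innerSL ℂ deltaOne).comp (ContinuousLinearMap.apply ℂ _ deltaOne)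

theorem tauF_eq_canonicalTrace (a : redCstar G) : tauF G a = canonicalTrace G a := by
  unfold tauF
  rfl

theorem deltaOne_eq_single [DecidableEq G] : (deltaOne : ℓ²(G, ℂ)) = lp.single 2 1 1 := by
  unfold deltaOne
  congr!

theorem norm_deltaOne : ‖(deltaOne : ℓ²(G, ℂ))‖ = 1 := by
  classical rw [deltaOne_eq_single, lp.norm_single (by norm_num), norm_one]

theorem canonicalTrace_apply (a : Op G) : canonicalTrace G a = inner ℂ deltaOne (a deltaOne) := rfl

theorem norm_canonicalTrace_apply_le (a : Op G) : ‖canonicalTrace G a‖ ≤ ‖a‖ := by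
  refine (norm_inner_le_norm (𝕜 := ℂ) deltaOne (a deltaOne)).trans ?_
  rw [norm_deltaOne, one_mul]
  simpa only [norm_deltaOne, mul_one] using a.le_opNorm deltaOne

theorem canonicalTrace_star (a : Op G) : canonicalTrace G (star a) = star (canonicalTrace G a) := by
  rw [canonicalTrace_apply, ContinuousLinearMap.star_eq_adjoint,
    ContinuousLinearMap.adjoint_inner_right]
  exact (inner_conj_symm _ _).symm

theorem canonicalTrace_one : canonicalTrace G 1 = 1 := by
  change inner ℂ deltaOne deltaOne = 1
  rw [inner_self_eq_norm_sq_to_K, norm_deltaOne, RCLike.ofReal_one, one_pow]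

theorem canonicalTrace_permRep {t : G} (ht : t ≠ 1) : canonicalTrace G (Op.permRep G G t) = 0 := by
  classical
  rw [canonicalTrace_apply, deltaOne_eq_single, permRep_single, lp.inner_single_left,
    lp.single_apply, Pi.single_apply, if_neg (by simpa using ht.symm), inner_zero_right]

theorem injective_of_isCstarSimple (hG : IsCstarSimple G) {B : Type*} [CStarAlgebra B]
    [Nontrivial B] (π : redCstar G →⋆ₐ[ℂ] B) (hπ : Continuous π) : Function.Injective π := by
  have coe_ker : (TwoSidedIdeal.ker π : Set (redCstar G)) = π ⁻¹' {0} :=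
    Set.ext fun _ => TwoSidedIdeal.mem_ker π
  rcases hG (TwoSidedIdeal.ker π) (coe_ker ▸ isClosed_singleton.preimage hπ) with h | h
  · exact (TwoSidedIdeal.ker_eq_bot π).1 h
  · have one_mem : (1 : redCstar G) ∈ TwoSidedIdeal.ker π := h ▸ trivial
    rw [TwoSidedIdeal.mem_ker, map_one] at one_mem
    exact absurd one_mem one_ne_zero

theorem exists_state_quotient_of_isCstarSimple (hG : IsCstarSimple G) {μ : WeakDual ℝ (LInf G)}
    (hμ : IsMean μ) :
    ∃ θ : Op (G ⧸ meanStabilizer μ) →ₚ[ℂ] ℂ, θ 1 = 1 ∧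
      ∀ t ≠ 1, θ (Op.permRep G (G ⧸ meanStabilizer μ) t : Op (G ⧸ meanStabilizer μ)) = 0 := by
  have : IsClosed (redCstar G : Set (Op G)) := isClosed_redCstar
  let _ : CStarAlgebra (redCstar G) := StarSubalgebra.cstarAlgebra _
  obtain ⟨π, π_uu⟩ := exists_starAlgHom_of_norm_groupAlgebraLift_le
    denseRange_groupAlgebraLift_regRep (σ := Op.permRep G (G ⧸ meanStabilizer μ)) fun c => by
      refine (norm_groupAlgebraLift_quotient_le hμ c).trans_eq ?_
      rw [← coe_groupAlgebraLift_regRep]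
      rfl
  have π_isometry : Isometry π :=
    NonUnitalStarAlgHom.isometry π (injective_of_isCstarSimple hG π
      (AddMonoidHomClass.continuous_of_bound π 1 fun a => by
        rw [one_mul]
        exact NonUnitalStarAlgHom.norm_apply_le π a))
  obtain ⟨θ, hθ⟩ := exists_positive_extension π π_isometry
    (φ := (canonicalTrace G).toLinearMap ∘ₗ (redCstar G).subtype.toAlgHom.toLinearMap)
    canonicalTrace_one (fun a => norm_canonicalTrace_apply_le (a : Op G))
    (fun a => canonicalTrace_star (a : Op G))
  refine ⟨θ, ?_, fun t ht => ?_⟩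
  · rw [← map_one π, hθ]
    exact canonicalTrace_one
  · rw [← π_uu t, hθ]
    change canonicalTrace G (uu t : Op G) = 0
    rw [coe_uu, canonicalTrace_permRep ht]

theorem averagedState_eq_canonicalTrace (hG : IsCstarSimple G) {μ : WeakDual ℝ (LInf G)}
    (hμ : IsBoundaryMean μ) {φ : Op G →ₚ[ℂ] ℂ} (h_one : φ 1 = 1) (a : redCstar G) :
    averagedState (Op.conj G G) φ hμ.toIsMean a = canonicalTrace G a := by
  obtain ⟨θ, θ_one, θ_permRep⟩ := exists_state_quotient_of_isCstarSimple hG hμ.toIsMean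
  let ψ := averagedState (Op.conj G G) φ hμ.toIsMean
  refine eq_on_redCstar (S := ⟨ψ.toLinearMap, map_continuous ψ⟩) (T := canonicalTrace G)
    (fun g => ?_) a
  change ψ (Op.permRep G G g : Op G) = _
  rcases eq_or_ne g 1 with rfl | hg
  · rw [map_one, OneMemClass.coe_one, canonicalTrace_one, averagedState_one _ _ h_one]
  · rw [canonicalTrace_permRep hg,
      averagedState_permRep_eq_zero hμ h_one θ_one θ_permRep hg]

end ReducedCstar

/-! ### Uniform averages -/

section UniformAverages

variable {ι κ E : Type*} [AddCommGroup E] [Module ℝ E]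

theorem exists_fin_sum_comp_eq [Fintype κ] (m : κ → ℕ) :
    ∃ f : Fin (∑ k, m k) → κ, ∀ z : κ → E, ∑ j, z (f j) = ∑ k, (m k : ℝ) • z k := by
  let e : Fin (∑ k, m k) ≃ Σ k, Fin (m k) :=
    (Fintype.equivFinOfCardEq (by simp only [Fintype.card_sigma, Fintype.card_fin])).symm
  refine ⟨fun j => (e j).1, fun z => ?_⟩
  rw [e.sum_comp fun p => z p.1, Fintype.sum_sigma]
  refine Finset.sum_congr rfl fun k _ => ?_
  change ∑ _ : Fin (m k), z k = _
  rw [Finset.sum_const, Finset.card_univ, Fintype.card_fin, Nat.cast_smul_eq_nsmul]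

variable [TopologicalSpace E] [ContinuousAdd E] [ContinuousSMul ℝ E] {s : Set E}

theorem exists_nat_weights_centerMass_mem [Fintype κ] {w : κ → ℝ} (w_nonneg : ∀ k, 0 ≤ w k)
    (w_sum : ∑ k, w k = 1) {z : κ → E} (hs : IsOpen s) (hz : ∑ k, w k • z k ∈ s) :
    ∃ m : κ → ℕ, 0 < ∑ k, m k ∧ (∑ k, (m k : ℝ))⁻¹ • ∑ k, (m k : ℝ) • z k ∈ s := by
  have tendsto_weight (k : κ) : Tendsto (fun x : ℝ => (⌈w k * x⌉₊ : ℝ) / x) atTop (𝓝 (w k)) :=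
    tendsto_nat_ceil_mul_div_atTop (w_nonneg k)
  have tendsto_total : Tendsto (fun x : ℝ => ∑ k, (⌈w k * x⌉₊ : ℝ) / x) atTop (𝓝 1) :=
    w_sum ▸ tendsto_finsetSum _ fun k _ => tendsto_weight k
  have tendsto_average : Tendsto (fun x : ℝ =>
      (∑ k, (⌈w k * x⌉₊ : ℝ) / x)⁻¹ • ∑ k, ((⌈w k * x⌉₊ : ℝ) / x) • z k) atTop
      (𝓝 (∑ k, w k • z k)) := by
    simpa only [inv_one, one_smul] using (tendsto_total.inv₀ one_ne_zero).smul
      (tendsto_finsetSum _ fun k _ => (tendsto_weight k).smul_const (z k))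
  obtain ⟨x, hx_mem, hx_pos, hx_total⟩ := ((tendsto_average.eventually (hs.mem_nhds hz)).and
    ((eventually_gt_atTop 0).and (tendsto_total.eventually (lt_mem_nhds one_pos)))).exists
  refine ⟨fun k => ⌈w k * x⌉₊, ?_, ?_⟩
  · rw [← Finset.sum_div] at hx_total
    exact_mod_cast (div_pos_iff_of_pos_right hx_pos).1 hx_total
  · have cancel_x : (∑ k, (⌈w k * x⌉₊ : ℝ) / x)⁻¹ • ∑ k, ((⌈w k * x⌉₊ : ℝ) / x) • z k =
        (∑ k, (⌈w k * x⌉₊ : ℝ))⁻¹ • ∑ k, (⌈w k * x⌉₊ : ℝ) • z k := by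
      simp only [div_eq_inv_mul, mul_smul, ← Finset.smul_sum, ← Finset.mul_sum]
      rw [smul_smul, mul_inv, inv_inv, mul_right_comm, mul_inv_cancel₀ hx_pos.ne', one_mul]
    exact cancel_x ▸ hx_mem

theorem exists_uniform_average_mem {z : ι → E} {y : E} (hy : y ∈ convexHull ℝ (range z))
    (hs : IsOpen s) (hys : y ∈ s) :
    ∃ n > 0, ∃ f : Fin n → ι, (n : ℝ)⁻¹ • ∑ j, z (f j) ∈ s := by
  obtain ⟨κ, _, w, v, w_nonneg, w_sum, hv, rfl⟩ := mem_convexHull_iff_exists_fintype.1 hy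
  choose p hp using hv
  obtain ⟨m, m_pos, hm⟩ := exists_nat_weights_centerMass_mem w_nonneg w_sum hs hys
  obtain ⟨f, hf⟩ := exists_fin_sum_comp_eq (E := E) m
  refine ⟨∑ k, m k, m_pos, p ∘ f, ?_⟩
  simpa only [Function.comp_apply, hp, hf v, Nat.cast_sum] using hm

end UniformAverages

section SelfAdjointNorm

variable {B : Type*} [CStarAlgebra B] [PartialOrder B] [StarOrderedRing B]

theorem norm_le_of_le_algebraMap {b : B} {r : ℝ} (hr : 0 ≤ r) (hb : b ≤ algebraMap ℝ B r)
    (hb' : -b ≤ algebraMap ℝ B r) : ‖b‖ ≤ 3 * r := by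
  have norm_algebraMap_le : ‖algebraMap ℝ B r‖ ≤ r :=
    (CStarAlgebra.norm_le_iff_le_algebraMap _ hr (algebraMap_nonneg B hr)).2 le_rfl
  have norm_add_le : ‖b + algebraMap ℝ B r‖ ≤ 2 * r := by
    refine (CStarAlgebra.norm_le_iff_le_algebraMap _ (by linarith)
      (neg_le_iff_add_nonneg'.1 hb')).2 ?_
    rw [two_mul, map_add]
    exact add_le_add_left hb _
  calc ‖b‖ = ‖b + algebraMap ℝ B r - algebraMap ℝ B r‖ := by rw [add_sub_cancel_right]
    _ ≤ 2 * r + r := (norm_sub_le _ _).trans (add_le_add norm_add_le norm_algebraMap_le)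
    _ = 3 * r := by ring

end SelfAdjointNorm

section NonposNhd

open scoped Pointwise

variable {ι : Type*} [Fintype ι] {B : Type*} [CStarAlgebra B] [PartialOrder B]

/-- The `ε`-neighbourhood of the cone of families with all members nonpositive. -/
def nonposNhd (ι B : Type*) [Fintype ι] [CStarAlgebra B] [PartialOrder B] (ε : ℝ) : Set (ι → B) :=
  Metric.ball 0 ε + Iic 0

theorem isOpen_nonposNhd (ε : ℝ) : IsOpen (nonposNhd ι B ε) := Metric.isOpen_ball.add_right

theorem Iic_zero_subset_nonposNhd {ε : ℝ} (hε : 0 < ε) : Iic 0 ⊆ nonposNhd ι B ε :=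
  fun k hk => ⟨0, Metric.mem_ball_self hε, k, hk, zero_add k⟩

variable [StarOrderedRing B]

theorem convex_nonposNhd (ε : ℝ) : Convex ℝ (nonposNhd ι B ε) :=
  (convex_ball 0 ε).add (convex_Iic 0)

theorem le_algebraMap_of_mem_nonposNhd {ε : ℝ} {y : ι → B} (hy : y ∈ nonposNhd ι B ε) {i : ι}
    (hi : IsSelfAdjoint (y i)) : y i ≤ algebraMap ℝ B ε := by
  obtain ⟨b, hb, k, hk, rfl⟩ := mem_add.1 hy
  have b_sa : IsSelfAdjoint (b i) := by
    simpa using hi.sub (IsSelfAdjoint.of_nonneg (neg_nonneg.2 (hk i))).neg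
  calc b i + k i ≤ b i := add_le_of_nonpos_right (hk i)
    _ ≤ algebraMap ℝ B ‖b i‖ := b_sa.le_algebraMap_norm_self
    _ ≤ algebraMap ℝ B ε :=
      algebraMap_mono B ((norm_le_pi_norm b i).trans (mem_ball_zero_iff.1 hb).le)

theorem exists_positive_functionals_of_disjoint {t : Set (ι → B)} (ht : Convex ℝ t)
    (t_sa : ∀ y ∈ t, ∀ i, IsSelfAdjoint (y i)) {ε : ℝ} (hε : 0 < ε)
    (hd : Disjoint (nonposNhd ι B ε) t) :
    ∃ φ : ι → B →ₚ[ℂ] ℂ, ∃ u > 0, ∀ y ∈ t, u ≤ ∑ i, (φ i (y i)).re := by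
  classical
  obtain ⟨f, u, f_lt, le_f⟩ := geometric_hahn_banach_open (convex_nonposNhd ε)
    (isOpen_nonposNhd ε) ht hd
  have f_nonpos (k : ι → B) (hk : k ≤ 0) : f k ≤ 0 := by
    by_contra! f_pos
    obtain ⟨c, hc, hcu⟩ : ∃ c : ℝ, 0 ≤ c ∧ u ≤ c * f k := ⟨|u| / f k, by positivity, by
      rw [div_mul_cancel₀ _ f_pos.ne']
      exact le_abs_self u⟩
    have := f_lt (c • k) (Iic_zero_subset_nonposNhd hε (smul_nonpos_of_nonneg_of_nonpos hc hk))
    rw [map_smul, smul_eq_mul] at this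
    exact this.not_ge hcu
  let r (i : ι) : B →ₗ[ℝ] ℝ := f.toLinearMap ∘ₗ LinearMap.single ℝ (fun _ => B) i ∘ₗ
    (selfAdjoint.submodule ℝ B).subtype ∘ₗ realPart
  have r_apply (i : ι) (b : B) : r i b = f (Pi.single i (realPart b : B)) := rfl
  let φ (i : ι) : B →ₚ[ℂ] ℂ := positiveOfRe (r i)
    (fun P hP => by
      have := f_nonpos (-Pi.single i P) (neg_nonpos.2 (Pi.single_nonneg.2 hP))
      rw [map_neg, neg_nonpos] at this
      rwa [r_apply, (IsSelfAdjoint.of_nonneg hP).coe_realPart])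
    (fun P hP => by
      rw [r_apply, realPart_I_smul, (IsSelfAdjoint.of_nonneg hP).imaginaryPart]
      simp only [neg_zero, ZeroMemClass.coe_zero, Pi.single_zero, map_zero])
  refine ⟨φ, u, by simpa using f_lt 0 (Iic_zero_subset_nonposNhd hε self_mem_Iic), fun y hy => ?_⟩
  calc u ≤ f y := le_f y hy
    _ = ∑ i, f (Pi.single i (y i)) := by rw [← map_sum, Finset.univ_sum_single]
    _ = ∑ i, (φ i (y i)).re := Finset.sum_congr rfl fun i _ => by
      rw [positiveOfRe_re, r_apply, (t_sa y hy i).coe_realPart]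

end NonposNhd

/-! ### Norm averages from averaged states -/

section OrbitAverage

variable {B : Type*} [CStarAlgebra B] (α : G →* (B ≃⋆ₐ[ℂ] B))

/-- The average of the automorphisms `α (g j)`. -/
def orbitAverage {n : ℕ} (g : Fin n → G) : B →ₗ[ℂ] B :=
  (n : ℂ)⁻¹ • ∑ j, (α (g j)).toAlgEquiv.toLinearMap

theorem orbitAverage_apply {n : ℕ} (g : Fin n → G) (b : B) :
    orbitAverage α g b = (n : ℂ)⁻¹ • ∑ j, α (g j) b := by
  simp only [orbitAverage, LinearMap.smul_apply, LinearMap.sum_apply]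
  rfl

theorem orbitAverage_one {n : ℕ} (hn : 0 < n) (g : Fin n → G) : orbitAverage α g 1 = 1 := by
  simp only [orbitAverage_apply, map_one, Finset.sum_const, Finset.card_univ, Fintype.card_fin]
  rw [← Nat.cast_smul_eq_nsmul ℂ, inv_smul_smul₀ (by exact_mod_cast hn.ne')]

theorem isSelfAdjoint_orbitAverage {n : ℕ} (g : Fin n → G) {b : B} (hb : IsSelfAdjoint b) :
    IsSelfAdjoint (orbitAverage α g b) := by
  rw [orbitAverage_apply]
  exact .smul (.inv₀ (.natCast n)) (isSelfAdjoint_sum _ fun j _ => hb.map (α (g j)))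

end OrbitAverage

section AveragedStates

variable {B : Type*} [CStarAlgebra B] [PartialOrder B] [StarOrderedRing B]
  (α : G →* (B ≃⋆ₐ[ℂ] B)) {μ : WeakDual ℝ (LInf G)} (hμ : IsMean μ)

theorem apply_eq_zero_of_apply_one_eq_zero {φ : B →ₚ[ℂ] ℂ} (h : φ 1 = 0) (b : B) : φ b = 0 := by
  have nonneg_subset_ker : {P : B | 0 ≤ P} ⊆ LinearMap.ker φ.toLinearMap := fun P hP => by
    refine le_antisymm ?_ (map_nonneg φ hP)
    calc φ P ≤ φ (algebraMap ℝ B ‖P‖) :=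
        OrderHomClass.mono φ (IsSelfAdjoint.of_nonneg hP).le_algebraMap_norm_self
      _ = 0 := by
        rw [Algebra.algebraMap_eq_smul_one, ← Complex.coe_smul, map_smul, h, smul_zero]
  exact Submodule.span_le.2 nonneg_subset_ker (CStarAlgebra.span_nonneg (A := B) ▸ trivial)

theorem exists_state_smul_eq {φ : B →ₚ[ℂ] ℂ} (h : φ 1 ≠ 0) :
    ∃ ψ : B →ₚ[ℂ] ℂ, ψ 1 = 1 ∧ ∃ c : ℝ, ∀ b, φ b = c * ψ b := by
  have one_nonneg := map_nonneg φ (zero_le_one (α := B))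
  have ofReal_re_one : ((φ 1).re : ℂ) = φ 1 :=
    Complex.ext rfl (Complex.nonneg_iff.1 one_nonneg).2
  refine ⟨.mk₀ ((φ 1)⁻¹ • φ.toLinearMap) fun P hP => ?_, ?_, (φ 1).re, fun b => ?_⟩
  · exact mul_nonneg (inv_nonneg.2 one_nonneg) (map_nonneg φ hP)
  · exact inv_mul_cancel₀ h
  · rw [ofReal_re_one]
    exact (mul_inv_cancel_left₀ h _).symm

theorem map_orbitRe_eq_zero {b : B} (hb : ∀ φ : B →ₚ[ℂ] ℂ, φ 1 = 1 → averagedState α φ hμ b = 0)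
    (φ : B →ₚ[ℂ] ℂ) : μ (orbitRe α φ b) = 0 := by
  by_cases h : φ 1 = 0
  · have : orbitRe α φ b = 0 := LInf.ext fun g => by
      rw [orbitRe_apply, apply_eq_zero_of_apply_one_eq_zero h]
      rfl
    rw [this, map_zero]
  · obtain ⟨ψ, ψ_one, c, hψ⟩ := exists_state_smul_eq h
    have : orbitRe α φ b = c • orbitRe α ψ b := LInf.ext fun g => by
      rw [LInf.smul_apply, orbitRe_apply, orbitRe_apply, hψ, Complex.re_ofReal_mul]
    rw [this, map_smul, ← averagedState_re α hμ, hb ψ ψ_one, Complex.zero_re, smul_zero]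

variable {ι : Type*} {a : ι → B} {ε : ℝ}

theorem not_disjoint_nonposNhd_convexHull [Fintype ι] (a_sa : ∀ i, IsSelfAdjoint (a i))
    (ha : ∀ i, ∀ φ : B →ₚ[ℂ] ℂ, φ 1 = 1 → averagedState α φ hμ (a i) = 0) (hε : 0 < ε) :
    ¬ Disjoint (nonposNhd ι B ε) (convexHull ℝ (range fun (g : G) i => α g (a i))) := by
  intro h
  let S : Submodule ℝ (ι → B) := Submodule.pi univ fun _ => selfAdjoint.submodule ℝ B
  have hull_sa : convexHull ℝ (range fun (g : G) i => α g (a i)) ⊆ S :=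
    convexHull_min (range_subset_iff.2 fun g i _ => (a_sa i).map (α g)) S.convex
  obtain ⟨φ, u, u_pos, hφ⟩ := exists_positive_functionals_of_disjoint (convex_convexHull ℝ _)
    (fun y hy i => hull_sa hy i trivial) hε h
  have map_sum_orbitRe : μ (∑ i, orbitRe α (φ i) (a i)) = 0 := by
    rw [map_sum]
    exact Finset.sum_eq_zero fun i _ => map_orbitRe_eq_zero α hμ (ha i) (φ i)
  have le_map : μ (u • 1) ≤ μ (∑ i, orbitRe α (φ i) (a i)) := hμ.mono fun g => by
    rw [LInf.smul_apply, LInf.one_apply, mul_one, lp.coeFn_sum, Finset.sum_apply]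
    exact hφ _ (subset_convexHull ℝ _ ⟨g⁻¹, rfl⟩)
  rw [map_sum_orbitRe, map_smul, hμ.map_one, smul_eq_mul, mul_one] at le_map
  exact le_map.not_gt u_pos

theorem exists_orbitAverage_le [Finite ι] (a_sa : ∀ i, IsSelfAdjoint (a i))
    (ha : ∀ i, ∀ φ : B →ₚ[ℂ] ℂ, φ 1 = 1 → averagedState α φ hμ (a i) = 0) (hε : 0 < ε) :
    ∃ n > 0, ∃ g : Fin n → G, ∀ i, orbitAverage α g (a i) ≤ algebraMap ℝ B ε := by
  cases nonempty_fintype ι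
  obtain ⟨y, y_nhd, y_hull⟩ := not_disjoint_iff.1
    (not_disjoint_nonposNhd_convexHull α hμ a_sa ha hε)
  obtain ⟨n, n_pos, g, hg⟩ := exists_uniform_average_mem y_hull (isOpen_nonposNhd ε) y_nhd
  have average_eq : (n : ℝ)⁻¹ • ∑ j, (fun i => α (g j) (a i)) =
      fun i => orbitAverage α g (a i) := funext fun i => by
    rw [orbitAverage_apply, Pi.smul_apply, Finset.sum_apply, ← Complex.coe_smul,
      Complex.ofReal_inv, Complex.ofReal_natCast]
  rw [average_eq] at hg
  exact ⟨n, n_pos, g, fun i =>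
    le_algebraMap_of_mem_nonposNhd hg (isSelfAdjoint_orbitAverage α g (a_sa i))⟩

theorem exists_norm_orbitAverage_le [Finite ι] (a_sa : ∀ i, IsSelfAdjoint (a i))
    (ha : ∀ i, ∀ φ : B →ₚ[ℂ] ℂ, φ 1 = 1 → averagedState α φ hμ (a i) = 0) (hε : 0 < ε) :
    ∃ n > 0, ∃ g : Fin n → G, ∀ i, ‖orbitAverage α g (a i)‖ ≤ 3 * ε := by
  obtain ⟨n, n_pos, g, hg⟩ := exists_orbitAverage_le α hμ (a := Sum.elim a (-a))
    (Sum.forall.2 ⟨a_sa, fun i => (a_sa i).neg⟩)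
    (Sum.forall.2 ⟨ha, fun i φ hφ => by
      rw [Sum.elim_inr, Pi.neg_apply, map_neg, ha i φ hφ, neg_zero]⟩) hε
  refine ⟨n, n_pos, g, fun i => norm_le_of_le_algebraMap hε.le (hg (.inl i)) ?_⟩
  rw [← map_neg]
  exact hg (.inr i)

theorem exists_norm_orbitAverage_lt {b : B}
    (hb : ∀ φ : B →ₚ[ℂ] ℂ, φ 1 = 1 → averagedState α φ hμ b = 0) (hε : 0 < ε) :
    ∃ n > 0, ∃ g : Fin n → G, ‖orbitAverage α g b‖ < ε := by
  obtain ⟨n, n_pos, g, hg⟩ := exists_norm_orbitAverage_le α hμ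
    (a := ![(realPart b : B), (imaginaryPart b : B)])
    (Fin.forall_fin_two.2 ⟨(realPart b).2, (imaginaryPart b).2⟩)
    (Fin.forall_fin_two.2 ⟨fun φ hφ => by
      change averagedState α φ hμ (realPart b : B) = 0
      rw [map_realPart, hb φ hφ, map_zero, ZeroMemClass.coe_zero], fun φ hφ => by
      change averagedState α φ hμ (imaginaryPart b : B) = 0
      rw [map_imaginaryPart, hb φ hφ, map_zero, ZeroMemClass.coe_zero]⟩)
    (show 0 < ε / 12 by positivity)
  refine ⟨n, n_pos, g, ?_⟩
  calc ‖orbitAverage α g b‖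
      = ‖orbitAverage α g (realPart b : B) +
          Complex.I • orbitAverage α g (imaginaryPart b : B)‖ := by
        rw [← map_smul, ← map_add, realPart_add_I_smul_imaginaryPart]
    _ ≤ 3 * (ε / 12) + 3 * (ε / 12) := by
        refine (norm_add_le _ _).trans (add_le_add (hg 0) ?_)
        rw [norm_smul, Complex.norm_I, one_mul]
        exact hg 1
    _ < ε := by linarith

end AveragedStates

/-! ### Powers' averaging property -/

section PowersAveraging

theorem coe_inv_smul_sum_uu {n : ℕ} (g : Fin n → G) (a : redCstar G) :
    (((n : ℂ)⁻¹ • ∑ j, uu (g j) * a * uu (g j)⁻¹ : redCstar G) : Op G) =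
      orbitAverage (Op.conj G G) g (a : Op G) := by
  have coe_sum : ((∑ j, uu (g j) * a * uu (g j)⁻¹ : redCstar G) : Op G) =
      ∑ j, Op.conj G G (g j) a := by
    rw [AddSubmonoidClass.coe_finsetSum]
    refine Finset.sum_congr rfl fun j _ => ?_
    rw [Op.conj_apply, ← coe_uu, ← coe_uu]
    rfl
  rw [orbitAverage_apply, ← coe_sum]
  rfl

theorem hasPowersAveraging_of_isCstarSimple (hG : IsCstarSimple G) : HasPowersAveraging G := by
  intro a ε hε
  obtain ⟨μ, hμ⟩ := exists_isBoundaryMean G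
  have averagedState_sub (φ : Op G →ₚ[ℂ] ℂ) (h_one : φ 1 = 1) :
      averagedState (Op.conj G G) φ hμ.toIsMean (a - tauF G a • 1 : Op G) = 0 := by
    rw [map_sub, map_smul, averagedState_eq_canonicalTrace hG hμ h_one, tauF_eq_canonicalTrace,
      averagedState_one _ _ h_one, smul_eq_mul, mul_one, sub_self]
  obtain ⟨n, n_pos, g, hg⟩ :=
    exists_norm_orbitAverage_lt (Op.conj G G) hμ.toIsMean averagedState_sub hε
  refine ⟨n, n_pos, g, ?_⟩
  rw [map_sub, map_smul, orbitAverage_one _ n_pos, ← coe_inv_smul_sum_uu] at hg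
  exact hg

theorem canonicalTrace_conj (g : G) (a : redCstar G) :
    canonicalTrace G (Op.conj G G g a) = canonicalTrace G a := by
  rw [Op.conj_apply]
  refine eq_on_redCstar (T := canonicalTrace G)
    (S := (canonicalTrace G).comp (ContinuousLinearMap.mulLeftRight ℂ (Op G)
      (Op.permRep G G g) (Op.permRep G G g⁻¹))) (fun t => ?_) a
  change canonicalTrace G (Op.permRep G G g * Op.permRep G G t * Op.permRep G G g⁻¹ : Op G) = _
  rw [← Op.conj_apply, Op.conj_permRep]
  rcases eq_or_ne t 1 with rfl | ht
  · rw [mul_one, mul_inv_cancel]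
  · rw [canonicalTrace_permRep ht, canonicalTrace_permRep (conj_eq_one_iff.not.2 ht)]

theorem canonicalTrace_conj_star_mul_self [DecidableEq G] (g : G) (a : Op G) :
    canonicalTrace G (Op.conj G G g⁻¹ (star a * a)) =
      inner ℂ (a (lp.single 2 g 1)) (a (lp.single 2 g 1)) := by
  have permRep_deltaOne : (Op.permRep G G g : Op G) deltaOne = lp.single 2 g 1 := by
    rw [deltaOne_eq_single, permRep_single, smul_eq_mul, mul_one]
  rw [canonicalTrace_apply, Op.conj_apply, inv_inv, ← star_coe_map,
    ContinuousLinearMap.star_eq_adjoint, ContinuousLinearMap.star_eq_adjoint, ← permRep_deltaOne]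
  simp only [mul_apply_eq_comp, ContinuousLinearMap.adjoint_inner_right]

theorem eq_zero_of_canonicalTrace_star_mul_self {a : redCstar G}
    (h : canonicalTrace G (star a * a : redCstar G) = 0) : a = 0 := by
  classical
  have apply_single (g : G) : (a : Op G) (lp.single 2 g 1) = 0 := by
    rw [← inner_self_eq_zero (𝕜 := ℂ), ← canonicalTrace_conj_star_mul_self]
    exact (canonicalTrace_conj g⁻¹ (star a * a)).trans h
  exact Subtype.ext <| lp.ext_continuousLinearMap (by norm_num) fun g =>
    ContinuousLinearMap.ext_ring (apply_single g)

theorem tauF_smul_one_mem (hP : HasPowersAveraging G) {I : TwoSidedIdeal (redCstar G)}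
    (hI : IsClosed (I : Set (redCstar G))) {b : redCstar G} (hb : b ∈ I) :
    tauF G b • (1 : redCstar G) ∈ I := by
  refine hI.closure_subset (Metric.mem_closure_iff.2 fun ε hε => ?_)
  obtain ⟨n, -, g, hg⟩ := hP b ε hε
  have average_mem : (n : ℂ)⁻¹ • ∑ j, uu (g j) * b * uu (g j)⁻¹ ∈ I := by
    rw [← smul_one_mul]
    exact I.mul_mem_left _ _ (sum_mem fun j _ => I.mul_mem_right _ _ (I.mul_mem_left _ _ hb))
  exact ⟨_, average_mem, by rwa [dist_comm, dist_eq_norm]⟩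

theorem isCstarSimple_of_hasPowersAveraging (hP : HasPowersAveraging G) : IsCstarSimple G := by
  intro I hI
  refine or_iff_not_imp_left.2 fun I_ne_bot => ?_
  obtain ⟨a, a_mem, a_ne⟩ : ∃ a ∈ I, a ≠ 0 := by
    by_contra! h
    exact I_ne_bot (eq_bot_iff.2 fun a ha => (TwoSidedIdeal.mem_bot _).2 (h a ha))
  have trace_ne : tauF G (star a * a) ≠ 0 := by
    rw [tauF_eq_canonicalTrace]
    exact fun h => a_ne (eq_zero_of_canonicalTrace_star_mul_self h)
  have one_mem : (1 : redCstar G) ∈ I := by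
    rw [← inv_smul_smul₀ trace_ne (1 : redCstar G), ← smul_one_mul]
    exact I.mul_mem_left _ _ (tauF_smul_one_mem hP hI (I.mul_mem_left _ _ a_mem))
  exact eq_top_iff.2 fun x _ => mul_one x ▸ I.mul_mem_left x 1 one_mem

end PowersAveraging

/-- **Theorem (Kennedy; Haagerup).** A discrete group is C*-simple if and only if it has
Powers' averaging property. -/
theorem cstarSimple_iff_powersAveraging (G : Type u) [Group G] :
    IsCstarSimple G ↔ HasPowersAveraging G :=
  ⟨hasPowersAveraging_of_isCstarSimple, isCstarSimple_of_hasPowersAveraging⟩
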